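/- Let f ∈ ℝ[x,y,z] be a polynomial of degree d. Then either there exists a constant c > 0, depending only on d, such that for all finite sets A, B, C ⊂ ℝ with |A| = |B| = |C| = n one has |f(A×B×C)| ≥ c·n^{3/2}, or f has one of the forms f = g(h(x)+k(y)+l(z)) or f = g(h(x)·k(y)·l(z)) for some univariate polynomials g, h, k, l ∈ ℝ[t]. -/

import Mathlib

noncomputable section

namespace ExpandingPolynomial

/-! ### Bivariate polynomials whose gradient has separated direction -/

section Classification

open Polynomial

/-- The derivation of `A[X]` applying a derivation of `A` to the coefficients. -/
def coeffDeriv {A : Type*} [CommRing A] [Algebra ℝ A] (δ : Derivation ℝ A A) :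
    Derivation ℝ A[X] A[X] :=
  PolynomialModule.equivPolynomialSelf.compDer δ.mapCoeffs

@[simp]
theorem coeff_coeffDeriv {A : Type*} [CommRing A] [Algebra ℝ A] (δ : Derivation ℝ A A) (p : A[X])
    (i : ℕ) : (coeffDeriv δ p).coeff i = δ (p.coeff i) := rfl

@[simp]
theorem coeffDeriv_C {A : Type*} [CommRing A] [Algebra ℝ A] (δ : Derivation ℝ A A) (a : A) :
    coeffDeriv δ (C a) = C (δ a) := by
  ext i
  rw [coeff_coeffDeriv, coeff_C, coeff_C]
  split_ifs <;> simp

@[simp]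
theorem coeffDeriv_X {A : Type*} [CommRing A] [Algebra ℝ A] (δ : Derivation ℝ A A) :
    coeffDeriv δ (X : A[X]) = 0 := by
  ext i
  rw [coeff_coeffDeriv, coeff_X]
  split_ifs <;> simp

/-- Differentiation with respect to the inner variable. -/
def dx : Derivation ℝ ℝ[X][X] ℝ[X][X] := coeffDeriv derivative'

@[simp]
theorem coeff_dx (F : ℝ[X][X]) (i : ℕ) : (dx F).coeff i = derivative (F.coeff i) := rfl

@[simp]
theorem dx_C (a : ℝ[X]) : dx (C a) = C (derivative a) := coeffDeriv_C _ _

@[simp]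
theorem dx_map_C (b : ℝ[X]) : dx (b.map C) = 0 := by
  ext i : 1
  simp

theorem derivative_dx (F : ℝ[X][X]) : derivative (dx F) = dx (derivative F) := by
  ext i : 1
  simp [coeff_derivative]

theorem derivation_polynomial_aeval {A : Type*} [CommRing A] [Algebra ℝ A] (δ : Derivation ℝ A A)
    (p : A) (g : ℝ[X]) : δ (aeval p g) = aeval p (derivative g) * δ p := by
  rw [Derivation.map_aeval, smul_eq_mul]

theorem map_C_ne_zero {b : ℝ[X]} (hb : b ≠ 0) : b.map (C : ℝ →+* ℝ[X]) ≠ 0 :=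
  (Polynomial.map_ne_zero_iff C_injective).2 hb

theorem natDegree_map_C (b : ℝ[X]) : (b.map (C : ℝ →+* ℝ[X])).natDegree = b.natDegree :=
  natDegree_map_eq_of_injective C_injective b

theorem leadingCoeff_map_C (b : ℝ[X]) :
    (b.map (C : ℝ →+* ℝ[X])).leadingCoeff = C b.leadingCoeff :=
  leadingCoeff_map_of_injective C_injective b

theorem eq_const_of_derivatives_eq_zero {F : ℝ[X][X]} (hx : dx F = 0) (hy : derivative F = 0) :
    ∃ r : ℝ, F = C (C r) := by
  have h1 := eq_C_of_derivative_eq_zero hy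
  have h2 : derivative (F.coeff 0) = 0 := by rw [← coeff_dx, hx, coeff_zero]
  exact ⟨_, by rw [h1, eq_C_of_derivative_eq_zero h2]⟩

theorem C_dvd_of_dvd_map_C_mul {a b : ℝ[X]} (hb : b ≠ 0) {F : ℝ[X][X]}
    (h : C a ∣ b.map C * F) : C a ∣ F := by
  have key : ∀ G : ℝ[X][X], C a ∣ G ↔ G.map (Ideal.Quotient.mk (Ideal.span {a})) = 0 := fun G => by
    rw [C_dvd_iff_dvd_coeff, Polynomial.ext_iff]
    simp [coeff_map, Ideal.Quotient.eq_zero_iff_mem, Ideal.mem_span_singleton]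
  rw [key, Polynomial.map_mul] at h
  rw [key]
  by_cases hn : Nontrivial (ℝ[X] ⧸ Ideal.span {a})
  · refine (isUnit_leadingCoeff_mul_right_eq_zero_iff ?_).1 h
    have hu : IsUnit (b.map (C : ℝ →+* ℝ[X])).leadingCoeff := by
      rw [leadingCoeff_map_C, isUnit_C]
      exact (leadingCoeff_ne_zero.2 hb).isUnit
    rw [leadingCoeff_map_of_leadingCoeff_ne_zero _ (hu.map _).ne_zero]
    exact hu.map _
  · rw [not_nontrivial_iff_subsingleton] at hn
    exact Subsingleton.elim _ _

/-- The gradient of `F` has the separated direction prescribed by `a b c e`. -/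
def Compatible (a b c e : ℝ[X]) (F : ℝ[X][X]) : Prop :=
  C a * b.map C * dx F = C c * e.map C * derivative F

/-- `H` is the derivative of `F` along the vector field `(a / c) ∂x`, which on compatible
polynomials is also `(e / b) ∂y`. -/
structure Transports (a b c e : ℝ[X]) (F H : ℝ[X][X]) : Prop where
  x : C c * H = C a * dx F
  y : b.map C * H = e.map C * derivative F

namespace Transports

variable {a b c e : ℝ[X]} {F H F' H' : ℝ[X][X]}

theorem compatible_right (h : Transports a b c e F H) : Compatible a b c e H := by
  have h1 := congrArg derivative h.x
  have h2 := congrArg dx h.y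
  simp only [derivative_mul, derivative_C, zero_mul, zero_add, derivative_dx] at h1
  simp only [Derivation.leibniz, dx_map_C, smul_eq_mul, mul_zero, add_zero] at h2
  unfold Compatible
  linear_combination C a * h2 - e.map C * h1

theorem add (h : Transports a b c e F H) (h' : Transports a b c e F' H') :
    Transports a b c e (F + F') (H + H') where
  x := by rw [map_add]; linear_combination h.x + h'.x
  y := by rw [map_add]; linear_combination h.y + h'.y

theorem smul (r : ℝ) (h : Transports a b c e F H) : Transports a b c e (r • F) (r • H) where
  x := by rw [Derivation.map_smul, mul_smul_comm, mul_smul_comm, h.x]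
  y := by rw [derivative_smul, mul_smul_comm, mul_smul_comm, h.y]

theorem sub (h : Transports a b c e F H) (h' : Transports a b c e F' H') :
    Transports a b c e (F - F') (H - H') := by
  simpa [sub_eq_add_neg] using h.add (h'.smul (-1))

theorem zero : Transports a b c e 0 0 := ⟨by simp, by simp⟩

theorem eq_const (ha : a ≠ 0) (he : e ≠ 0) (h : Transports a b c e F 0) :
    ∃ r : ℝ, F = C (C r) := by
  have h1 := h.x
  have h2 := h.y
  rw [mul_zero, eq_comm] at h1 h2
  exact eq_const_of_derivatives_eq_zero ((mul_eq_zero.1 h1).resolve_left (C_ne_zero.2 ha))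
    ((mul_eq_zero.1 h2).resolve_left (map_C_ne_zero he))

end Transports

theorem Compatible.exists_transports {a b c e : ℝ[X]} {F : ℝ[X][X]} (hb : b ≠ 0) (hc : c ≠ 0)
    (hac : IsCoprime a c) (h : Compatible a b c e F) : ∃ H, Transports a b c e F H := by
  have h1 : C c ∣ b.map C * (C a * dx F) :=
    ⟨e.map C * derivative F, by unfold Compatible at h; linear_combination h⟩
  have h2 : C c ∣ dx F :=
    (hac.symm.map (C : ℝ[X] →+* ℝ[X][X])).dvd_of_dvd_mul_left (C_dvd_of_dvd_map_C_mul hb h1)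
  obtain ⟨G, hG⟩ := h2
  refine ⟨C a * G, by rw [hG]; ring, ?_⟩
  refine mul_left_cancel₀ (C_ne_zero.2 hc) ?_
  unfold Compatible at h
  rw [hG] at h
  linear_combination h

theorem derivative_ne_zero_of_natDegree_pos {A : Type*} [CommRing A] [IsDomain A] [CharZero A]
    {F : A[X]} (h : 0 < F.natDegree) : derivative F ≠ 0 := fun h0 => by
  rw [derivative_eq_zero.1 h0] at h
  exact lt_irrefl _ h

theorem Transports.natDegree_add_eq {a b c e : ℝ[X]} {F H : ℝ[X][X]} (hb : b ≠ 0) (he : e ≠ 0)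
    (h : Transports a b c e F H) (hF : 0 < F.natDegree) :
    H ≠ 0 ∧ b.natDegree + H.natDegree + 1 = e.natDegree + F.natDegree ∧
      b.leadingCoeff • H.leadingCoeff = (e.leadingCoeff * F.natDegree) • F.leadingCoeff := by
  have hF' := derivative_ne_zero_of_natDegree_pos hF
  have hne : H ≠ 0 := by
    rintro rfl
    have := h.y
    rw [mul_zero, eq_comm] at this
    exact mul_ne_zero (map_C_ne_zero he) hF' this
  refine ⟨hne, ?_, ?_⟩
  · have := congrArg natDegree h.y
    rw [natDegree_mul (map_C_ne_zero hb) hne, natDegree_mul (map_C_ne_zero he) hF',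
      natDegree_map_C, natDegree_map_C, natDegree_derivative] at this
    omega
  · have := congrArg leadingCoeff h.y
    rw [leadingCoeff_mul, leadingCoeff_mul, leadingCoeff_map_C, leadingCoeff_map_C,
      leadingCoeff_derivative] at this
    rw [smul_eq_C_mul, this, smul_eq_C_mul]
    simp
    ring

theorem Transports.natDegree_le {a b c e : ℝ[X]} {F H : ℝ[X][X]} (hc : c ≠ 0)
    (h : Transports a b c e F H) : H.natDegree ≤ F.natDegree := by
  have h1 : (dx F).natDegree ≤ F.natDegree := natDegree_le_iff_coeff_eq_zero.2 fun i hi => by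
    rw [coeff_dx, coeff_eq_zero_of_natDegree_lt hi, derivative_zero]
  have := congrArg natDegree h.x
  rw [natDegree_C_mul hc] at this
  exact this.le.trans ((natDegree_C_mul_le _ _).trans h1)

theorem exists_derivative_eq (q : ℝ[X]) : ∃ g : ℝ[X], derivative g = q := by
  induction q using Polynomial.induction_on' with
  | add p q hp hq =>
    obtain ⟨g, hg⟩ := hp
    obtain ⟨g', hg'⟩ := hq
    exact ⟨g + g', by rw [derivative_add, hg, hg']⟩
  | monomial n r =>
    refine ⟨monomial (n + 1) (r / (n + 1)), ?_⟩
    rw [derivative_monomial]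
    congr 1
    push_cast
    field_simp

/-- The additive case of the classification. -/
theorem exists_additive_form {a b c e : ℝ[X]} (ha : a ≠ 0) (hb : b ≠ 0) (hc : c ≠ 0) (he : e ≠ 0)
    (hac : IsCoprime a c) (hbe : IsCoprime b e) (hdeg : e.natDegree ≤ b.natDegree)
    {F₀ : ℝ[X][X]} (hF₀ : Compatible a b c e F₀) (hF₀' : derivative F₀ ≠ 0) :
    ∃ φ ψ : ℝ[X], a * derivative φ = c ∧ e * derivative ψ = b ∧
      ∀ F, Compatible a b c e F → ∃ g : ℝ[X], F = aeval (C φ + ψ.map C) g := by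
  have hlast : ∀ N, ∀ F : ℝ[X][X], F.natDegree = N → 0 < N → Compatible a b c e F →
      ∃ F' : ℝ[X][X], ∃ r : ℝ, r ≠ 0 ∧ Transports a b c e F' (C (C r)) := by
    intro N
    induction N using Nat.strong_induction_on with
    | _ N ih =>
      intro F hN hpos hF
      obtain ⟨H, hH⟩ := hF.exists_transports hb hc hac
      obtain ⟨hne, hd, -⟩ := hH.natDegree_add_eq hb he (hN ▸ hpos)
      have hHc := hH.compatible_right
      rcases Nat.eq_zero_or_pos H.natDegree with h0 | h0
      · have hHC := eq_C_of_natDegree_eq_zero h0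
        obtain ⟨H', hH'⟩ := hHc.exists_transports hb hc hac
        have hy := hH'.y
        rw [hHC, derivative_C, mul_zero] at hy
        have hH'0 := (mul_eq_zero.1 hy).resolve_left (map_C_ne_zero hb)
        subst hH'0
        obtain ⟨r, hr⟩ := hH'.eq_const ha he
        refine ⟨F, r, ?_, hr ▸ hH⟩
        rintro rfl
        simp [hr] at hne
      · exact ih H.natDegree (by omega) H rfl h0 hHc
  have hpos : 0 < F₀.natDegree := by
    by_contra h
    exact hF₀' (derivative_of_natDegree_zero (by omega))
  obtain ⟨F', r, hr, hF'⟩ := hlast _ F₀ rfl hpos hF₀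
  have hru : IsUnit (C (C r) : ℝ[X][X]) := by simpa [isUnit_C] using hr
  have hua : IsUnit a := by
    have h1 : C a ∣ C c := by
      rw [← hru.dvd_mul_right]
      exact ⟨_, hF'.x⟩
    rw [C_dvd_iff_dvd_coeff] at h1
    exact hac.isUnit_of_dvd' dvd_rfl (by simpa using h1 0)
  have hue : IsUnit e := by
    have h1 : e.map C ∣ b.map (C : ℝ →+* ℝ[X]) := by
      rw [← hru.dvd_mul_right]
      exact ⟨_, hF'.y⟩
    have h2 : IsUnit (e.map (C : ℝ →+* ℝ[X])) :=
      (hbe.map (mapRingHom C)).isUnit_of_dvd' h1 dvd_rfl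
    rw [isUnit_iff_degree_eq_zero, ← degree_map_eq_of_injective (C_injective (R := ℝ))]
    exact degree_eq_zero_of_isUnit h2
  obtain ⟨φ, hφ⟩ := exists_derivative_eq (↑hua.unit⁻¹ * c)
  obtain ⟨ψ, hψ⟩ := exists_derivative_eq (↑hue.unit⁻¹ * b)
  have hφ' : a * derivative φ = c := by rw [hφ, ← mul_assoc]; simp
  have hψ' : e * derivative ψ = b := by rw [hψ, ← mul_assoc]; simp
  refine ⟨φ, ψ, hφ', hψ', ?_⟩
  set p : ℝ[X][X] := C φ + ψ.map C with hp
  have hpx : C a * dx p = C c := by simp [hp, ← hφ']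
  have hpy : e.map C * derivative p = b.map C := by
    simp [hp, derivative_map, ← hψ']
  have hall : ∀ N, ∀ F : ℝ[X][X], F.natDegree = N → Compatible a b c e F →
      ∃ g : ℝ[X], F = aeval p g := by
    intro N
    induction N using Nat.strong_induction_on with
    | _ N ih =>
      intro F hN hF
      obtain ⟨H, hH⟩ := hF.exists_transports hb hc hac
      have hg : ∃ g : ℝ[X], H = aeval p g := by
        rcases Nat.eq_zero_or_pos F.natDegree with h0 | h0
        · refine ⟨0, ?_⟩
          have hy := hH.y
          rw [derivative_of_natDegree_zero h0, mul_zero] at hy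
          rw [(mul_eq_zero.1 hy).resolve_left (map_C_ne_zero hb), map_zero]
        · obtain ⟨-, hd, -⟩ := hH.natDegree_add_eq hb he h0
          exact ih H.natDegree (by omega) H rfl hH.compatible_right
      obtain ⟨g, rfl⟩ := hg
      obtain ⟨G, rfl⟩ := exists_derivative_eq g
      have hG : Transports a b c e (aeval p G) (aeval p (derivative G)) := by
        refine ⟨?_, ?_⟩
        · rw [derivation_polynomial_aeval, ← hpx]; ring
        · have := derivation_polynomial_aeval
            ((derivative' : Derivation ℝ[X] ℝ[X][X] ℝ[X][X]).restrictScalars ℝ) p G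
          simp only [Derivation.restrictScalars_apply, derivative'_apply] at this
          rw [this, ← hpy]; ring
      have hconst := hH.sub hG
      rw [sub_self] at hconst
      obtain ⟨s, hs⟩ := hconst.eq_const ha he
      refine ⟨G + C s, ?_⟩
      rw [map_add, aeval_C, ← sub_eq_iff_eq_add', hs]
      rfl
  exact fun F hF => hall _ F rfl hF

/-- `u` solves the linear differential equation `a u' = s c u`. -/
def IsExpSol (a c : ℝ[X]) (s : ℝ) (u : ℝ[X]) : Prop :=
  a * derivative u = C s * c * u

theorem exists_eq_mul_isCoprime (u : ℝ[X]) {v : ℝ[X]} (hv : v ≠ 0) :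
    ∃ g u' v' : ℝ[X], IsCoprime u' v' ∧ u = g * u' ∧ v = g * v' := by
  classical
  have h := isCoprime_div_gcd_div_gcd (p := u) hv
  exact ⟨_, _, _, h, (EuclideanDomain.mul_div_cancel' (gcd_ne_zero_of_right hv)
    (gcd_dvd_left u v)).symm, (EuclideanDomain.mul_div_cancel' (gcd_ne_zero_of_right hv)
    (gcd_dvd_right u v)).symm⟩

theorem eq_C_mul_of_wronskian_eq_zero {u v : ℝ[X]} (hv : v ≠ 0)
    (h : derivative u * v = u * derivative v) : ∃ r : ℝ, u = C r * v := by
  obtain ⟨g, u', v', hco, rfl, rfl⟩ := exists_eq_mul_isCoprime u hv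
  have hg : g ≠ 0 := left_ne_zero_of_mul hv
  have hw : wronskian u' v' = 0 := by
    refine mul_left_cancel₀ (mul_ne_zero hg hg) ?_
    rw [derivative_mul, derivative_mul] at h
    unfold wronskian
    linear_combination -h
  obtain ⟨hu', hv'⟩ := hco.wronskian_eq_zero_iff.1 hw
  have e1 := eq_C_of_derivative_eq_zero hu'
  have e2 := eq_C_of_derivative_eq_zero hv'
  have h0 : v'.coeff 0 ≠ 0 := fun h0 => by
    rw [h0, C_0] at e2
    simp [e2] at hv
  refine ⟨u'.coeff 0 / v'.coeff 0, ?_⟩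
  rw [e1, e2, coeff_C_zero, coeff_C_zero, mul_left_comm, ← C_mul, div_mul_cancel₀ _ h0]

namespace IsExpSol

variable {a c u v : ℝ[X]} {s t : ℝ}

theorem pow (h : IsExpSol a c s u) (n : ℕ) : IsExpSol a c (n * s) (u ^ n) := by
  unfold IsExpSol at *
  rcases n with _ | n
  · simp
  · rw [derivative_pow, C_mul, Nat.add_sub_cancel, pow_succ]
    linear_combination C ((n + 1 : ℕ) : ℝ) * u ^ n * h

theorem exists_eq_C_mul (ha : a ≠ 0) (hv : v ≠ 0) (h : IsExpSol a c s u) (h' : IsExpSol a c s v) :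
    ∃ r : ℝ, u = C r * v := by
  refine eq_C_mul_of_wronskian_eq_zero hv (mul_left_cancel₀ ha ?_)
  unfold IsExpSol at *
  linear_combination v * h - u * h'

theorem of_mul (hu : u ≠ 0) (h : IsExpSol a c s u) (h' : IsExpSol a c t (u * v)) :
    IsExpSol a c (t - s) v := by
  unfold IsExpSol at *
  refine mul_left_cancel₀ hu ?_
  rw [derivative_mul] at h'
  rw [C_sub]
  linear_combination h' - v * h

theorem dvd (ha : a ≠ 0) {μ : ℝ} {j k : ℕ} (hj : j ≠ 0) (hjk : j ≤ k) (hu : u ≠ 0)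
    (h : IsExpSol a c (j * μ) u) (h' : IsExpSol a c (k * μ) v) : u ∣ v := by
  have h1 := h.pow k
  have h2 := h'.pow j
  rw [show (j : ℝ) * (k * μ) = k * (j * μ) by ring] at h2
  obtain ⟨r, hr⟩ := exists_eq_C_mul ha (pow_ne_zero k hu) h2 h1
  rw [← IsIntegrallyClosed.pow_dvd_pow_iff hj, hr]
  exact (pow_dvd_pow _ hjk).mul_left _

theorem eq_const (ha : a ≠ 0) (h : IsExpSol a c 0 u) : ∃ r : ℝ, u = C r := by
  unfold IsExpSol at h
  rw [C_0, zero_mul, zero_mul] at h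
  exact ⟨_, eq_C_of_derivative_eq_zero ((mul_eq_zero.1 h).resolve_left ha)⟩

end IsExpSol

/-- Eigenvectors of the derivation split as products of univariate solutions. -/
theorem Transports.exists_eq_mul {a b c e : ℝ[X]} {s : ℝ} {E : ℝ[X][X]} (ha : a ≠ 0) (hE : E ≠ 0)
    (h : Transports a b c e E (s • E)) :
    ∃ u v : ℝ[X], u ≠ 0 ∧ v ≠ 0 ∧ IsExpSol a c s u ∧ IsExpSol e b s v ∧ E = C u * v.map C := by
  have hcoeff : ∀ j, IsExpSol a c s (E.coeff j) := fun j => by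
    have := congrArg (fun F => F.coeff j) h.x
    simp only [coeff_C_mul, coeff_smul, coeff_dx, smul_eq_C_mul] at this
    unfold IsExpSol
    linear_combination -this
  set u := E.leadingCoeff with hu
  have hu0 : u ≠ 0 := leadingCoeff_ne_zero.2 hE
  obtain ⟨t, ht⟩ : ∃ t : ℝ, u.eval t ≠ 0 := by
    by_contra! h0
    exact hu0 (Polynomial.funext fun t => by simp [h0])
  set v : ℝ[X] := C (u.eval t)⁻¹ * E.map (evalRingHom t) with hv
  have hEuv : E = C u * v.map C := by
    ext1 j
    obtain ⟨r, hr⟩ := (hcoeff j).exists_eq_C_mul ha hu0 (hcoeff _)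
    rw [coeff_C_mul, coeff_map, hv, coeff_C_mul, coeff_map, hr]
    simp only [coe_evalRingHom, eval_mul, eval_C]
    rw [mul_comm, mul_comm r, inv_mul_cancel_left₀ ht]
  have hv0 : v ≠ 0 := by
    rintro h0
    rw [h0] at hEuv
    simp at hEuv
    exact hE hEuv
  refine ⟨u, v, hu0, hv0, hcoeff _, ?_, hEuv⟩
  have hy := h.y
  rw [hEuv, derivative_C_mul, derivative_map, ← IsScalarTower.algebraMap_smul ℝ[X] s, smul_eq_C_mul,
    algebraMap_eq] at hy
  have h1 : (b * C s * v).map (C : ℝ →+* ℝ[X]) = (e * derivative v).map C := by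
    refine mul_left_cancel₀ (C_ne_zero.2 hu0) ?_
    simp only [Polynomial.map_mul, map_C]
    linear_combination hy
  have h2 := map_injective _ C_injective h1
  unfold IsExpSol
  linear_combination -h2

theorem Transports.exists_of_mem_span {a b c e : ℝ[X]} {μ : ℝ} (hμ : μ ≠ 0) {N : ℕ} {F : ℝ[X][X]}
    (hF : F ∈ Submodule.span ℝ
      {E : ℝ[X][X] | ∃ k < N, Transports a b c e E (((k : ℝ) * μ) • E)}) :
    ∃ G ∈ Submodule.span ℝ {E : ℝ[X][X] | ∃ k < N, Transports a b c e E (((k : ℝ) * μ) • E)},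
      Transports a b c e G (((N : ℝ) * μ) • G + F) := by
  induction hF using Submodule.span_induction with
  | mem E hE =>
    obtain ⟨k, hk, hE'⟩ := hE
    have hne : ((k : ℝ) - N) * μ ≠ 0 :=
      mul_ne_zero (sub_ne_zero.2 (by exact_mod_cast hk.ne)) hμ
    refine ⟨(((k : ℝ) - N) * μ)⁻¹ • E,
      Submodule.smul_mem _ _ (Submodule.subset_span ⟨k, hk, hE'⟩), ?_⟩
    convert hE'.smul (((k : ℝ) - N) * μ)⁻¹ using 1
    rw [smul_smul, smul_smul]
    nth_rewrite 2 [← one_smul ℝ E]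
    rw [← add_smul]
    congr 1
    rw [← inv_mul_cancel₀ hne]
    ring
  | zero => exact ⟨0, Submodule.zero_mem _, by simpa using Transports.zero⟩
  | add F F' _ _ h h' =>
    obtain ⟨G, hG, hGF⟩ := h
    obtain ⟨G', hG', hGF'⟩ := h'
    refine ⟨G + G', Submodule.add_mem _ hG hG', ?_⟩
    convert hGF.add hGF' using 1
    rw [smul_add]
    abel
  | smul r F _ h =>
    obtain ⟨G, hG, hGF⟩ := h
    refine ⟨r • G, Submodule.smul_mem _ _ hG, ?_⟩
    convert hGF.smul r using 1
    rw [smul_add, smul_comm]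

/-- In the multiplicative case, compatible polynomials are sums of eigenvectors. -/
theorem Compatible.mem_span {a b c e : ℝ[X]} (hb : b ≠ 0) (hc : c ≠ 0) (he : e ≠ 0)
    (hac : IsCoprime a c) (hdeg : e.natDegree = b.natDegree + 1) (N : ℕ) {F : ℝ[X][X]}
    (hF : Compatible a b c e F) (hN : F.natDegree < N) :
    F ∈ Submodule.span ℝ {E : ℝ[X][X] | ∃ k < N,
      Transports a b c e E (((k : ℝ) * (e.leadingCoeff / b.leadingCoeff)) • E)} := by
  set μ := e.leadingCoeff / b.leadingCoeff with hμ
  have hlb : b.leadingCoeff ≠ 0 := leadingCoeff_ne_zero.2 hb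
  have hμ0 : μ ≠ 0 := div_ne_zero (leadingCoeff_ne_zero.2 he) hlb
  induction N generalizing F with
  | zero => exact absurd hN (Nat.not_lt_zero _)
  | succ N ih =>
    have hmono : Submodule.span ℝ {E : ℝ[X][X] | ∃ k < N, Transports a b c e E (((k : ℝ) * μ) • E)}
        ≤ Submodule.span ℝ
          {E : ℝ[X][X] | ∃ k < N + 1, Transports a b c e E (((k : ℝ) * μ) • E)} :=
      Submodule.span_mono fun E ⟨k, hk, h⟩ => ⟨k, by omega, h⟩
    rcases (Nat.lt_succ_iff.1 hN).lt_or_eq with hlt | hEq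
    · exact hmono (ih hF hlt)
    obtain ⟨H, hH⟩ := hF.exists_transports hb hc hac
    have hmem : H - ((N : ℝ) * μ) • F ∈ Submodule.span ℝ
        {E : ℝ[X][X] | ∃ k < N, Transports a b c e E (((k : ℝ) * μ) • E)} := by
      rcases Nat.eq_zero_or_pos N with h0 | h0
      · have hy := hH.y
        rw [derivative_of_natDegree_zero (hEq.trans h0), mul_zero] at hy
        rw [(mul_eq_zero.1 hy).resolve_left (map_C_ne_zero hb), h0]
        simp
      · obtain ⟨hne, hd, hl⟩ := hH.natDegree_add_eq hb he (hEq ▸ h0)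
        have hHN : H.natDegree = N := by omega
        refine ih ?_ ?_
        · have h1 := hH.compatible_right
          unfold Compatible at hF h1 ⊢
          rw [map_sub, map_sub, Derivation.map_smul, derivative_smul, mul_sub, mul_sub,
            mul_smul_comm, mul_smul_comm, hF, h1]
        · have hl' : H.leadingCoeff = ((N : ℝ) * μ) • F.leadingCoeff := by
            rw [← hEq, hμ, ← inv_smul_smul₀ hlb H.leadingCoeff, hl, smul_smul]
            congr 1
            field_simp
          by_contra hge
          have h1 : (H - ((N : ℝ) * μ) • F).natDegree = N := le_antisymm
            ((natDegree_sub_le _ _).trans (max_le hHN.le ((natDegree_smul_le _ _).trans hEq.le)))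
            (not_lt.1 hge)
          have h2 : (H - ((N : ℝ) * μ) • F).leadingCoeff = 0 := by
            rw [leadingCoeff, h1, coeff_sub, coeff_smul]
            rw [leadingCoeff, leadingCoeff, hHN, hEq] at hl'
            rw [hl', sub_self]
          rw [leadingCoeff_eq_zero.1 h2, natDegree_zero] at h1
          omega
    obtain ⟨G, hG, hGF⟩ := Transports.exists_of_mem_span hμ0 hmem
    have h1 := hH.sub hGF
    rw [← sub_add_cancel F G]
    refine Submodule.add_mem _ (Submodule.subset_span ⟨N, by omega, ?_⟩) (hmono hG)
    convert h1 using 1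
    rw [smul_sub]
    abel

/-- The multiplicative case of the classification. -/
theorem exists_multiplicative_form {a b c e : ℝ[X]} (ha : a ≠ 0) (hb : b ≠ 0) (hc : c ≠ 0)
    (he : e ≠ 0) (hac : IsCoprime a c) (hdeg : b.natDegree < e.natDegree)
    {F₀ : ℝ[X][X]} (hF₀ : Compatible a b c e F₀) (hF₀' : derivative F₀ ≠ 0) :
    ∃ (h κ : ℝ[X]) (s : ℝ), s ≠ 0 ∧ h ≠ 0 ∧ κ ≠ 0 ∧ IsExpSol a c s h ∧ IsExpSol e b s κ ∧
      ∀ F, Compatible a b c e F → ∃ g : ℝ[X], F = aeval (C h * κ.map C) g := by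
  have hpos : 0 < F₀.natDegree := by
    by_contra h
    exact hF₀' (derivative_of_natDegree_zero (by omega))
  have hdeg' : e.natDegree = b.natDegree + 1 := by
    obtain ⟨H, hH⟩ := hF₀.exists_transports hb hc hac
    have h1 := (hH.natDegree_add_eq hb he hpos).2.1
    have h2 := hH.natDegree_le hc
    omega
  set μ := e.leadingCoeff / b.leadingCoeff with hμ
  have hμ0 : μ ≠ 0 := div_ne_zero (leadingCoeff_ne_zero.2 he) (leadingCoeff_ne_zero.2 hb)
  have hsub : ∀ V : Submodule ℝ ℝ[X][X],
      (∀ (k : ℕ) (u v : ℝ[X]), u ≠ 0 → v ≠ 0 → IsExpSol a c (k * μ) u → IsExpSol e b (k * μ) v →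
        C u * v.map C ∈ V) → ∀ F, Compatible a b c e F → F ∈ V := by
    intro V hV F hF
    refine Submodule.span_le.2 ?_ (hF.mem_span hb hc he hac hdeg' _ (Nat.lt_succ_self _))
    rintro E ⟨k, -, hE⟩
    by_cases hE0 : E = 0
    · simp [hE0]
    obtain ⟨u, v, hu, hv, hu', hv', rfl⟩ := hE.exists_eq_mul ha hE0
    exact hV k u v hu hv hu' hv'
  have hex : ∃ k : ℕ, 0 < k ∧ ∃ u v : ℝ[X], u ≠ 0 ∧ v ≠ 0 ∧ IsExpSol a c (k * μ) u ∧
      IsExpSol e b (k * μ) v := by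
    by_contra! hno
    refine hF₀' (LinearMap.mem_ker.1 (hsub (LinearMap.ker
      ((derivative : ℝ[X][X] →ₗ[ℝ[X]] ℝ[X][X]).restrictScalars ℝ)) ?_ _ hF₀))
    intro k u v hu hv hu' hv'
    rcases Nat.eq_zero_or_pos k with rfl | hk
    · rw [Nat.cast_zero, zero_mul] at hv'
      obtain ⟨r, rfl⟩ := hv'.eq_const he
      rw [LinearMap.mem_ker]
      simp
    · exact absurd hv' (hno k hk u v hu hv hu')
  classical
  set j := Nat.find hex with hj
  obtain ⟨hj0, h, κ, hh, hκ, hh', hκ'⟩ := Nat.find_spec hex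
  rw [← hj] at hj0 hh' hκ'
  refine ⟨h, κ, j * μ, mul_ne_zero (by exact_mod_cast hj0.ne') hμ0, hh, hκ, hh', hκ', ?_⟩
  have hmain : ∀ (k : ℕ) (u v : ℝ[X]), u ≠ 0 → v ≠ 0 → IsExpSol a c (k * μ) u →
      IsExpSol e b (k * μ) v → ∃ g : ℝ[X], C u * v.map C = aeval (C h * κ.map C) g := by
    intro k
    induction k using Nat.strong_induction_on with
    | _ k ih =>
      intro u v hu hv hu' hv'
      rcases Nat.eq_zero_or_pos k with rfl | hk
      · rw [Nat.cast_zero, zero_mul] at hu' hv'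
        obtain ⟨r, rfl⟩ := hu'.eq_const ha
        obtain ⟨r', rfl⟩ := hv'.eq_const he
        exact ⟨C (r * r'), by rw [aeval_C, map_mul, map_C]; rfl⟩
      · have hjk : j ≤ k := Nat.find_min' hex ⟨hk, u, v, hu, hv, hu', hv'⟩
        obtain ⟨u₁, rfl⟩ := hh'.dvd ha hj0.ne' hjk hh hu'
        obtain ⟨v₁, rfl⟩ := hκ'.dvd he hj0.ne' hjk hκ hv'
        have e1 : (k : ℝ) * μ - j * μ = ((k - j : ℕ) : ℝ) * μ := by
          rw [Nat.cast_sub hjk]; ring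
        obtain ⟨g, hg⟩ := ih (k - j) (by omega) u₁ v₁ (right_ne_zero_of_mul hu)
          (right_ne_zero_of_mul hv) (e1 ▸ hh'.of_mul hh hu') (e1 ▸ hκ'.of_mul hκ hv')
        refine ⟨X * g, ?_⟩
        rw [map_mul (aeval _), aeval_X, ← hg, C_mul, Polynomial.map_mul]
        ring
  intro F hF
  have := hsub (LinearMap.range (aeval (C h * κ.map C) : ℝ[X] →ₐ[ℝ] ℝ[X][X]).toLinearMap) ?_ F hF
  · obtain ⟨g, hg⟩ := this
    exact ⟨g, hg.symm⟩
  · intro k u v hu hv hu' hv'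
    obtain ⟨g, hg⟩ := hmain k u v hu hv hu' hv'
    exact ⟨g, hg.symm⟩

/-- Polynomials with the same separated gradient direction are all polynomials in a single
polynomial, which is a sum or a product of univariate polynomials. -/
theorem exists_common_form {a b c e : ℝ[X]} (ha : a ≠ 0) (hb : b ≠ 0) (hc : c ≠ 0)
    (he : e ≠ 0) (hac : IsCoprime a c) (hbe : IsCoprime b e)
    {F₀ : ℝ[X][X]} (hF₀ : Compatible a b c e F₀) (hF₀' : derivative F₀ ≠ 0) :
    (∃ φ ψ : ℝ[X], a * derivative φ = c ∧ e * derivative ψ = b ∧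
      ∀ F, Compatible a b c e F → ∃ g : ℝ[X], F = aeval (C φ + ψ.map C) g) ∨
    ∃ (h κ : ℝ[X]) (s : ℝ), s ≠ 0 ∧ h ≠ 0 ∧ κ ≠ 0 ∧ IsExpSol a c s h ∧ IsExpSol e b s κ ∧
      ∀ F, Compatible a b c e F → ∃ g : ℝ[X], F = aeval (C h * κ.map C) g := by
  rcases le_or_gt e.natDegree b.natDegree with hdeg | hdeg
  · exact Or.inl (exists_additive_form ha hb hc he hac hbe hdeg hF₀ hF₀')
  · exact Or.inr (exists_multiplicative_form ha hb hc he hac hdeg hF₀ hF₀')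

theorem Compatible.of_mul {g a b c e : ℝ[X]} {g' : ℝ[X]} {F : ℝ[X][X]} (hg : g ≠ 0) (hg' : g' ≠ 0)
    (h : Compatible (g * a) (g' * b) (g * c) (g' * e) F) : Compatible a b c e F := by
  unfold Compatible at *
  refine mul_left_cancel₀ (mul_ne_zero (C_ne_zero.2 hg) (map_C_ne_zero hg')) ?_
  simp only [C_mul, Polynomial.map_mul] at h
  linear_combination h

theorem exists_form_two {a b c e : ℝ[X]} (ha : a ≠ 0) (hb : b ≠ 0) (hc : c ≠ 0) (he : e ≠ 0)
    {F : ℝ[X][X]} (hF : Compatible a b c e F) (hF' : derivative F ≠ 0) :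
    ∃ g h k : ℝ[X], F = aeval (C h + k.map C) g ∨ F = aeval (C h * k.map C) g := by
  obtain ⟨p, a', c', hac, rfl, rfl⟩ := exists_eq_mul_isCoprime a hc
  obtain ⟨q, b', e', hbe, rfl, rfl⟩ := exists_eq_mul_isCoprime b he
  have hF₁ := hF.of_mul (left_ne_zero_of_mul ha) (left_ne_zero_of_mul hb)
  rcases exists_common_form (right_ne_zero_of_mul ha) (right_ne_zero_of_mul hb)
    (right_ne_zero_of_mul hc) (right_ne_zero_of_mul he) hac hbe hF₁ hF' with
    ⟨φ, ψ, -, -, h⟩ | ⟨φ, ψ, s, -, -, -, -, -, h⟩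
  · obtain ⟨g, hg⟩ := h F hF₁
    exact ⟨g, φ, ψ, Or.inl hg⟩
  · obtain ⟨g, hg⟩ := h F hF₁
    exact ⟨g, φ, ψ, Or.inr hg⟩

theorem aeval_injective_of_derivative_ne_zero {p : ℝ[X][X]} (hp : derivative p ≠ 0) :
    Function.Injective (aeval p : ℝ[X] →ₐ[ℝ] ℝ[X][X]) := by
  rw [injective_iff_map_eq_zero]
  intro g hg
  have h1 : (g.map (C : ℝ →+* ℝ[X])).comp p = 0 := by
    rw [← hg, comp, eval₂_map]
    rfl
  rcases comp_eq_zero_iff.1 h1 with h2 | ⟨-, h2⟩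
  · exact (Polynomial.map_eq_zero_iff C_injective).1 h2
  · rw [h2, derivative_C] at hp
    exact absurd rfl hp

theorem coeffDeriv_mapAlgHom_aeval (p : ℝ[X][X]) (G : ℝ[X][X]) :
    coeffDeriv dx (mapAlgHom (aeval p : ℝ[X] →ₐ[ℝ] ℝ[X][X]) G) =
      mapAlgHom (aeval p : ℝ[X] →ₐ[ℝ] ℝ[X][X]) (dx G) * C (dx p) := by
  ext1 i
  rw [coeff_coeffDeriv, coeff_mul_C]
  simp only [coe_mapAlgHom, coeff_map, coeff_dx, RingHom.coe_coe]
  exact derivation_polynomial_aeval _ _ _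

theorem mapAlgHom_aeval_map_C (p : ℝ[X][X]) (q : ℝ[X]) :
    mapAlgHom (aeval p : ℝ[X] →ₐ[ℝ] ℝ[X][X]) (q.map C) = q.map (C.comp C) := by
  ext1 i
  simp

set_option maxSynthPendingDepth 10 in
instance : IsRightCancelAdd ℝ[X][X][X] := inferInstance

/-- If the fibre direction is transported by `p`, the two-variable classification applies to the
factored polynomial. -/
theorem compatible_of_map {a c E K q : ℝ[X]} {p G : ℝ[X][X]} (hc : c ≠ 0)
    (hp : derivative p ≠ 0) (hpx : C a * dx p = C c * aeval p q)
    (h : C (C a) * E.map (C.comp C) *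
        coeffDeriv dx (mapAlgHom (aeval p : ℝ[X] →ₐ[ℝ] ℝ[X][X]) G) =
      C (C c) * K.map (C.comp C) * derivative (mapAlgHom (aeval p : ℝ[X] →ₐ[ℝ] ℝ[X][X]) G)) :
    Compatible q E 1 K G := by
  have hinj : Function.Injective (mapAlgHom (aeval p : ℝ[X] →ₐ[ℝ] ℝ[X][X])) :=
    map_injective _ (aeval_injective_of_derivative_ne_zero hp)
  unfold Compatible
  apply hinj
  refine mul_left_cancel₀ (C_ne_zero.2 (C_ne_zero.2 hc)) ?_
  have hd : derivative (mapAlgHom (aeval p : ℝ[X] →ₐ[ℝ] ℝ[X][X]) G) =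
      mapAlgHom (aeval p : ℝ[X] →ₐ[ℝ] ℝ[X][X]) (derivative G) := derivative_map _ _
  rw [coeffDeriv_mapAlgHom_aeval, hd] at h
  have hq : mapAlgHom (aeval p : ℝ[X] →ₐ[ℝ] ℝ[X][X]) (C q) = C (aeval p q) := map_C _
  have hpx' := congrArg (C : ℝ[X][X] →+* ℝ[X][X][X]) hpx
  rw [C_mul, C_mul] at hpx'
  simp only [map_mul, mapAlgHom_aeval_map_C, hq, map_one]
  linear_combination h - E.map (C.comp C) *
    mapAlgHom (aeval p : ℝ[X] →ₐ[ℝ] ℝ[X][X]) (dx G) * hpx'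

theorem eq_C_mul_X_pow_of_isExpSol {s t : ℝ} {h : ℝ[X]} (hs : s ≠ 0)
    (hh : IsExpSol (C s * X) 1 t h) :
    ∃ (r : ℝ) (j : ℕ), h = C r * X ^ j := by
  refine ⟨h.leadingCoeff, h.natDegree, ?_⟩
  have hcoeff : ∀ n, s * n * h.coeff n = t * h.coeff n := fun n => by
    have := congrArg (fun q => q.coeff n) hh
    simp only [mul_one, coeff_C_mul, mul_assoc] at this
    rw [← this]
    rcases n with _ | n
    · simp
    · rw [coeff_X_mul, coeff_derivative]
      push_cast
      ring
  ext n
  rw [coeff_C_mul, coeff_X_pow]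
  split_ifs with hn
  · rw [hn, mul_one, leadingCoeff]
  · rw [mul_zero]
    by_contra h0
    have h1 := mul_right_cancel₀ h0 (hcoeff n)
    have hne : h ≠ 0 := by
      rintro rfl
      simp at h0
    have h2 := mul_right_cancel₀ (leadingCoeff_ne_zero.2 hne) (hcoeff h.natDegree)
    rw [← h2] at h1
    exact hn (by exact_mod_cast mul_left_cancel₀ hs h1)

theorem exists_form_three {a b c e E K : ℝ[X]} (ha : a ≠ 0) (hb : b ≠ 0) (hc : c ≠ 0) (he : e ≠ 0)
    (hE : E ≠ 0) (hK : K ≠ 0) {F : ℝ[X][X][X]} (hxy : ∀ i, Compatible a b c e (F.coeff i))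
    (hxz : C (C a) * E.map (C.comp C) * coeffDeriv dx F =
      C (C c) * K.map (C.comp C) * derivative F)
    {i : ℕ} (hi : derivative (F.coeff i) ≠ 0) (hF : derivative F ≠ 0) :
    ∃ g h k l : ℝ[X], F = aeval (C (C h) + C (k.map C) + l.map (C.comp C)) g ∨
      F = aeval (C (C h) * C (k.map C) * l.map (C.comp C)) g := by
  obtain ⟨p₁, a, c, hac, rfl, rfl⟩ := exists_eq_mul_isCoprime a hc
  obtain ⟨p₂, b, e, hbe, rfl, rfl⟩ := exists_eq_mul_isCoprime b he
  obtain ⟨p₃, E, K, hEK, rfl, rfl⟩ := exists_eq_mul_isCoprime E hK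
  have hp₁ := left_ne_zero_of_mul ha
  have hp₂ := left_ne_zero_of_mul hb
  have hp₃ := left_ne_zero_of_mul hE
  replace ha := right_ne_zero_of_mul ha
  replace hb := right_ne_zero_of_mul hb
  replace hc := right_ne_zero_of_mul hc
  replace he := right_ne_zero_of_mul he
  replace hE := right_ne_zero_of_mul hE
  replace hK := right_ne_zero_of_mul hK
  replace hxy := fun i => (hxy i).of_mul hp₁ hp₂
  have hCC : Function.Injective ((C : ℝ[X] →+* ℝ[X][X]).comp C) := C_injective.comp C_injective
  replace hxz : C (C a) * E.map (C.comp C) * coeffDeriv dx F =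
      C (C c) * K.map (C.comp C) * derivative F := by
    refine mul_left_cancel₀ (mul_ne_zero (C_ne_zero.2 (C_ne_zero.2 hp₁))
      ((Polynomial.map_ne_zero_iff hCC).2 hp₃)) ?_
    simp only [C_mul, Polynomial.map_mul] at hxz
    linear_combination hxz
  have hlift : ∀ p : ℝ[X][X], (∀ H, Compatible a b c e H → ∃ g : ℝ[X], H = aeval p g) →
      ∃ G : ℝ[X][X], mapAlgHom (aeval p : ℝ[X] →ₐ[ℝ] ℝ[X][X]) G = F := fun p hp => by
    have : F ∈ lifts ((aeval p : ℝ[X] →ₐ[ℝ] ℝ[X][X]) : ℝ[X] →+* ℝ[X][X]) := by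
      rw [lifts_iff_coeff_lifts]
      intro n
      obtain ⟨g, hg⟩ := hp _ (hxy n)
      exact ⟨g, hg.symm⟩
    obtain ⟨G, hG⟩ := (mem_lifts _).1 this
    exact ⟨G, hG⟩
  have hGne : ∀ {p G : ℝ[X][X]}, mapAlgHom (aeval p : ℝ[X] →ₐ[ℝ] ℝ[X][X]) G = F →
      derivative G ≠ 0 := fun {p G} hG h0 => hF <| by
    rw [← hG]
    exact (derivative_map _ _).trans (by rw [h0, Polynomial.map_zero])
  have hC : ∀ (p : ℝ[X][X]) (q : ℝ[X]), mapAlgHom (aeval p : ℝ[X] →ₐ[ℝ] ℝ[X][X]) (C q) =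
    C (aeval p q) := fun p q => map_C _
  rcases exists_common_form ha hb hc he hac hbe (hxy i) hi with
    ⟨φ, ψ, hφ, hψ, hform⟩ | ⟨φ, ψ, s, hs, hφ0, hψ0, hφ, hψ, hform⟩
  · obtain ⟨G, hG⟩ := hlift _ hform
    have hp : derivative (C φ + ψ.map (C : ℝ →+* ℝ[X])) ≠ 0 := by
      rw [derivative_add, derivative_C, zero_add, derivative_map]
      refine map_C_ne_zero ?_
      rintro h0
      simp [h0] at hψ
      exact hb hψ.symm
    have hpx : C a * dx (C φ + ψ.map C) = C c * aeval (C φ + ψ.map C) (1 : ℝ[X]) := by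
      simp [← hφ]
    have hcomp := compatible_of_map hc hp hpx (by rw [hG]; exact hxz)
    rcases exists_common_form one_ne_zero hE one_ne_zero hK isCoprime_one_left hEK hcomp
      (hGne hG) with ⟨u, v, hu, -, h⟩ | ⟨u, v, t, ht, hu0, -, hu, -⟩
    · obtain ⟨g, rfl⟩ := h G hcomp
      have hu' : derivative (u - X) = 0 := by
        rw [derivative_sub, derivative_X, ← hu, one_mul, sub_self]
      have hu'' := eq_C_of_derivative_eq_zero hu'
      rw [sub_eq_iff_eq_add] at hu''
      generalize (u - X).coeff 0 = r at hu''
      subst hu''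
      refine ⟨g, φ + C r, ψ, v, Or.inl ?_⟩
      rw [← hG, ← aeval_algHom_apply, map_add, mapAlgHom_aeval_map_C, hC]
      rw [← C_add]
      congr 4
      rw [map_add (aeval _), aeval_C, aeval_X, C_add (a := φ),
        show algebraMap ℝ ℝ[X][X] r = C (C r) from rfl]
      ring
    · exfalso
      unfold IsExpSol at hu
      rw [one_mul, mul_one] at hu
      have h1 := degree_derivative_lt hu0
      rw [hu, degree_C_mul ht] at h1
      exact lt_irrefl _ h1
  · obtain ⟨G, hG⟩ := hlift _ hform
    have hp : derivative (C φ * ψ.map (C : ℝ →+* ℝ[X])) ≠ 0 := by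
      rw [derivative_C_mul, derivative_map]
      refine mul_ne_zero (C_ne_zero.2 hφ0) (map_C_ne_zero ?_)
      rintro h0
      unfold IsExpSol at hψ
      rw [h0, mul_zero] at hψ
      exact mul_ne_zero (mul_ne_zero (C_ne_zero.2 hs) hb) hψ0 hψ.symm
    have hpx : C a * dx (C φ * ψ.map C) = C c * aeval (C φ * ψ.map C) (C s * X) := by
      have := congrArg (C : ℝ[X] →+* ℝ[X][X]) hφ
      simp only [C_mul] at this
      simp only [Derivation.leibniz, dx_map_C, dx_C, smul_eq_mul, mul_zero, zero_add,
        map_mul (aeval _), aeval_X, aeval_C]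
      rw [show algebraMap ℝ ℝ[X][X] s = C (C s) from rfl]
      linear_combination ψ.map C * this
    have hcomp := compatible_of_map hc hp hpx (by rw [hG]; exact hxz)
    rcases exists_common_form (mul_ne_zero (C_ne_zero.2 hs) X_ne_zero) hE one_ne_zero hK
      isCoprime_one_right hEK hcomp (hGne hG) with ⟨u, v, hu, -⟩ | ⟨u, v, t, -, -, -, hu, -, h⟩
    · exfalso
      simpa using congrArg (eval 0) hu
    · obtain ⟨g, rfl⟩ := h G hcomp
      obtain ⟨r, j, rfl⟩ := eq_C_mul_X_pow_of_isExpSol hs hu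
      refine ⟨g, C r * φ ^ j, ψ ^ j, v, Or.inr ?_⟩
      rw [← hG, ← aeval_algHom_apply, map_mul, mapAlgHom_aeval_map_C, hC, ← C_mul]
      congr 4
      rw [map_mul (aeval _), aeval_C, map_pow, aeval_X, mul_pow, C_mul (a := C r), C_pow,
        Polynomial.map_pow, mul_assoc]
      rfl

end Classification

end ExpandingPolynomial

end

open MvPolynomial

noncomputable section

namespace ExpandingPolynomial

/-! ### Proximity of values -/

/-- The number of points of `T` in the half-open interval spanned by `t` and `u`. -/
def gap (T : Finset ℝ) (t u : ℝ) : ℕ := (T.filter fun s => min t u ≤ s ∧ s < max t u).card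

/-- Pairs of points of `T` with at most `L` points of `T` between them. -/
def closePairs (T : Finset ℝ) (L : ℕ) : Finset (ℝ × ℝ) :=
  (T ×ˢ T).filter fun q => gap T q.1 q.2 ≤ L

theorem card_filter_gap_le (T : Finset ℝ) (L : ℕ) (t : ℝ) :
    (T.filter fun t' => gap T t t' ≤ L).card ≤ 2 * L + 2 := by
  have hup : (T.filter fun t' => t ≤ t' ∧ gap T t t' ≤ L).card ≤ L + 1 := by
    rcases (T.filter fun t' => t ≤ t' ∧ gap T t t' ≤ L).eq_empty_or_nonempty with h | h
    · simp [h]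
    obtain ⟨hT, hle, hgap⟩ := Finset.mem_filter.1 (Finset.max'_mem _ h)
    set M := (T.filter fun t' => t ≤ t' ∧ gap T t t' ≤ L).max' h with hM
    have hsub : (T.filter fun t' => t ≤ t' ∧ gap T t t' ≤ L) ⊆
        insert M (T.filter fun s => min t M ≤ s ∧ s < max t M) := fun s hs => by
      have hsM : s ≤ M := Finset.le_max' _ s hs
      obtain ⟨hs1, hs2, -⟩ := Finset.mem_filter.1 hs
      rcases hsM.eq_or_lt with h1 | h1
      · simp [h1]
      · rw [Finset.mem_insert, Finset.mem_filter]
        exact Or.inr ⟨hs1, (min_le_left _ _).trans hs2, lt_max_of_lt_right h1⟩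
    refine (Finset.card_le_card hsub).trans ((Finset.card_insert_le _ _).trans ?_)
    exact Nat.succ_le_succ hgap
  have hdown : (T.filter fun t' => t' ≤ t ∧ gap T t t' ≤ L).card ≤ L + 1 := by
    rcases (T.filter fun t' => t' ≤ t ∧ gap T t t' ≤ L).eq_empty_or_nonempty with h | h
    · simp [h]
    obtain ⟨hT, hle, hgap⟩ := Finset.mem_filter.1 (Finset.min'_mem _ h)
    set M := (T.filter fun t' => t' ≤ t ∧ gap T t t' ≤ L).min' h with hM
    have hsub : (T.filter fun t' => t' ≤ t ∧ gap T t t' ≤ L) ⊆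
        insert t (T.filter fun s => min t M ≤ s ∧ s < max t M) := fun s hs => by
      have hsM : M ≤ s := Finset.min'_le _ s hs
      obtain ⟨hs1, hs2, -⟩ := Finset.mem_filter.1 hs
      rcases hs2.eq_or_lt with h1 | h1
      · simp [h1]
      · rw [Finset.mem_insert, Finset.mem_filter]
        exact Or.inr ⟨hs1, (min_le_right _ _).trans hsM, lt_max_of_lt_left h1⟩
    refine (Finset.card_le_card hsub).trans ((Finset.card_insert_le _ _).trans ?_)
    exact Nat.succ_le_succ hgap
  have hsub : (T.filter fun t' => gap T t t' ≤ L) ⊆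
      (T.filter fun t' => t ≤ t' ∧ gap T t t' ≤ L) ∪
        (T.filter fun t' => t' ≤ t ∧ gap T t t' ≤ L) := fun s hs => by
    rw [Finset.mem_filter] at hs
    rw [Finset.mem_union, Finset.mem_filter, Finset.mem_filter]
    rcases le_total t s with h | h
    · exact Or.inl ⟨hs.1, h, hs.2⟩
    · exact Or.inr ⟨hs.1, h, hs.2⟩
  have := (Finset.card_le_card hsub).trans (Finset.card_union_le _ _)
  omega

theorem card_closePairs_le (T : Finset ℝ) (L : ℕ) :
    (closePairs T L).card ≤ T.card * (2 * L + 2) := by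
  have hsub : closePairs T L ⊆
      T.biUnion fun t => (T.filter fun t' => gap T t t' ≤ L).image fun t' => (t, t') := by
    rintro ⟨t, t'⟩ h
    simp only [closePairs, Finset.mem_filter, Finset.mem_product] at h
    simp only [Finset.mem_biUnion, Finset.mem_image, Finset.mem_filter, Prod.mk.injEq]
    exact ⟨t, h.1.1, t', ⟨h.1.2, h.2⟩, rfl, rfl⟩
  refine (Finset.card_le_card hsub).trans (Finset.card_biUnion_le_card_mul _ _ _ fun t _ => ?_)
  exact Finset.card_image_le.trans (card_filter_gap_le T L t)

/-- If the intervals `[a, π a]` overlap boundedly, then the values of a polynomial at the two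
endpoints are on average close to each other in `T`. -/
theorem sum_gap_le (A : Finset ℝ) (π : ℝ → ℝ) (M : ℕ) (hπ : ∀ a ∈ A, a < π a)
    (hM : ∀ r, (A.filter fun a => a ≤ r ∧ r ≤ π a).card ≤ M) (T : Finset ℝ) {d : ℕ}
    {p : Polynomial ℝ} (hp : p.natDegree ≤ d) :
    ∑ a ∈ A, gap T (p.eval a) (p.eval (π a)) ≤ T.card * (d * M) := by
  simp only [gap, Finset.card_filter]
  rw [Finset.sum_comm]
  refine (Finset.sum_le_card_nsmul T _ (d * M) fun s _ => ?_).trans (by simp)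
  rw [← Finset.card_filter]
  by_cases h0 : p - Polynomial.C s = 0
  · rw [Finset.filter_eq_empty_iff.2]
    · simp
    · rintro a - ⟨-, h⟩
      rw [sub_eq_zero.1 h0] at h
      simp at h
  · have hsub : (A.filter fun a => min (p.eval a) (p.eval (π a)) ≤ s ∧
        s < max (p.eval a) (p.eval (π a))) ⊆
        (p - Polynomial.C s).roots.toFinset.biUnion fun r => A.filter fun a => a ≤ r ∧ r ≤ π a := by
      intro a ha
      obtain ⟨haA, h1, h2⟩ := Finset.mem_filter.1 ha
      have hivt := intermediate_value_uIcc (a := a) (b := π a) (f := fun x => p.eval x)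
        p.continuous.continuousOn
      obtain ⟨r, hr, hrs⟩ := hivt (Set.mem_uIcc.2 (by
        rcases le_total (p.eval a) (p.eval (π a)) with h | h
        · rw [min_eq_left h] at h1; rw [max_eq_right h] at h2
          exact Or.inl ⟨h1, h2.le⟩
        · rw [min_eq_right h] at h1; rw [max_eq_left h] at h2
          exact Or.inr ⟨h1, h2.le⟩) : s ∈ Set.uIcc _ _)
      rw [Set.uIcc_of_le (hπ a haA).le] at hr
      simp only [Finset.mem_biUnion, Multiset.mem_toFinset, Finset.mem_filter]
      refine ⟨r, ?_, haA, hr.1, hr.2⟩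
      rw [Polynomial.mem_roots h0]
      simpa [sub_eq_zero] using hrs
    refine (Finset.card_le_card hsub).trans ((Finset.card_biUnion_le_card_mul _ _ M
      fun r _ => hM r).trans (Nat.mul_le_mul_right _ ?_))
    refine (Multiset.toFinset_card_le _).trans ((Polynomial.card_roots' _).trans ?_)
    rwa [Polynomial.natDegree_sub_C]

/-- Most points of `A` have a partner to their right, avoiding a small forbidden set, such that
the resulting intervals overlap boundedly. -/
theorem exists_partner (A A₀ : Finset ℝ) (hA₀ : A₀ ⊆ A) (K : ℕ) (bad : ℝ → Finset ℝ)
    (hbad : ∀ a ∈ A₀, (bad a).card < K) :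
    ∃ A' ⊆ A₀, A₀.card ≤ A'.card + K ∧ ∃ π : ℝ → ℝ,
      (∀ a ∈ A', π a ∈ A ∧ a < π a ∧ π a ∉ bad a) ∧
      ∀ r, (A'.filter fun a => a ≤ r ∧ r ≤ π a).card ≤ K + 1 := by
  set A' := A₀.filter fun a => K ≤ (A.filter fun b => a < b).card with hA'
  have hcand : ∀ a ∈ A', ((A.filter fun b => a < b) \ bad a).Nonempty := fun a ha => by
    obtain ⟨h1, h2⟩ := Finset.mem_filter.1 ha
    rw [← Finset.card_pos]
    have := Finset.le_card_sdiff (bad a) (A.filter fun b => a < b)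
    have := hbad a h1
    omega
  let π : ℝ → ℝ := fun a => if h : ((A.filter fun b => a < b) \ bad a).Nonempty then
    ((A.filter fun b => a < b) \ bad a).min' h else 0
  have hπ : ∀ a ∈ A', π a ∈ (A.filter fun b => a < b) \ bad a := fun a ha => by
    simp only [π, dif_pos (hcand a ha)]
    exact Finset.min'_mem _ _
  have hπmin : ∀ a ∈ A', ∀ b ∈ A, a < b → b ∉ bad a → π a ≤ b := fun a ha b hb hab hbb => by
    simp only [π, dif_pos (hcand a ha)]
    exact Finset.min'_le _ _ (by simp [hb, hab, hbb])
  refine ⟨A', Finset.filter_subset _ _, ?_, π, fun a ha => ?_, fun r => ?_⟩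
  · rw [hA', ← Finset.card_filter_add_card_filter_not (s := A₀)
      (fun a => K ≤ (A.filter fun b => a < b).card)]
    refine Nat.add_le_add_left ?_ _
    rcases (A₀.filter fun a => ¬ K ≤ (A.filter fun b => a < b).card).eq_empty_or_nonempty
      with h | h
    · rw [h]; simp
    obtain ⟨h1, h2⟩ := Finset.mem_filter.1 (Finset.min'_mem _ h)
    set μ := (A₀.filter fun a => ¬ K ≤ (A.filter fun b => a < b).card).min' h
    have hsub : (A₀.filter fun a => ¬ K ≤ (A.filter fun b => a < b).card) ⊆
        insert μ (A.filter fun b => μ < b) := fun a ha => by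
      rcases (Finset.min'_le _ a ha).eq_or_lt with h3 | h3
      · rw [Finset.mem_insert]; exact Or.inl h3.symm
      · rw [Finset.mem_insert, Finset.mem_filter]
        exact Or.inr ⟨hA₀ (Finset.mem_filter.1 ha).1, h3⟩
    have := (Finset.card_le_card hsub).trans (Finset.card_insert_le _ _)
    omega
  · have := hπ a ha
    simp only [Finset.mem_sdiff, Finset.mem_filter] at this
    exact ⟨this.1.1, this.1.2, this.2⟩
  · rcases (A'.filter fun a => a ≤ r ∧ r ≤ π a).eq_empty_or_nonempty with h | h
    · simp [h]
    obtain ⟨h1, h2, h3⟩ := Finset.mem_filter.1 (Finset.min'_mem _ h)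
    set μ := (A'.filter fun a => a ≤ r ∧ r ≤ π a).min' h
    have hsub : (A'.filter fun a => a ≤ r ∧ r ≤ π a) ⊆ insert μ (insert (π μ) (bad μ)) :=
        fun a ha => by
      obtain ⟨ha1, ha2, ha3⟩ := Finset.mem_filter.1 ha
      simp only [Finset.mem_insert]
      rcases (Finset.min'_le _ a ha).eq_or_lt with h4 | h4
      · exact Or.inl h4.symm
      · by_cases hb : a ∈ bad μ
        · exact Or.inr (Or.inr hb)
        · exact Or.inr (Or.inl (le_antisymm (ha2.trans h3)
            (hπmin μ h1 a (hA₀ (Finset.mem_filter.1 ha1).1) h4 hb)))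
    have h5 := (Finset.card_le_card hsub).trans (Finset.card_insert_le _ _)
    have h6 := Finset.card_insert_le (π μ) (bad μ)
    have h7 := hbad μ (Finset.mem_filter.1 h1).1
    omega

/-- For a family of polynomials of bounded degree, three quarters of the value pairs are close,
for a notion of closeness with few pairs. -/
theorem exists_few_far_pairs {ι : Type*} (A : Finset ℝ) (π : ℝ → ℝ) (M : ℕ)
    (hπ : ∀ a ∈ A, a < π a) (hM : ∀ r, (A.filter fun a => a ≤ r ∧ r ≤ π a).card ≤ M)
    (T : Finset ℝ) {d : ℕ} (I : Finset ι) (p : ι → Polynomial ℝ)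
    (hp : ∀ i, (p i).natDegree ≤ d) {n : ℕ} (hn : 0 < n) :
    ∃ Q : Finset (ℝ × ℝ), n * Q.card ≤ (8 * (d + 1) * (M + 1) + 4) * (T.card * (T.card + n)) ∧
      4 * ((A ×ˢ I).filter fun q => ¬ ((p q.2).eval q.1 ∈ T → (p q.2).eval (π q.1) ∈ T →
        ((p q.2).eval q.1, (p q.2).eval (π q.1)) ∈ Q)).card ≤ n * I.card := by
  set m := T.card with hm
  set E := 4 * (d + 1) * (M + 1) with hE
  set L := E * m / n + 1 with hL
  have hLn : L * n ≤ E * m + n := by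
    rw [hL, add_mul, one_mul]
    exact Nat.add_le_add_right (Nat.div_mul_le_self _ _) _
  have hLn' : E * m ≤ L * n := (Nat.lt_div_mul_add hn).le.trans (by rw [hL, add_mul, one_mul])
  refine ⟨closePairs T L, ?_, ?_⟩
  · calc n * (closePairs T L).card ≤ n * (m * (2 * L + 2)) :=
          Nat.mul_le_mul_left _ (card_closePairs_le T L)
      _ = m * (2 * (L * n) + 2 * n) := by ring
      _ ≤ m * (2 * (E * m + n) + 2 * n) := by gcongr
      _ ≤ (2 * E + 4) * (m * (m + n)) := by nlinarith [Nat.zero_le (E * m * n), Nat.zero_le (m*m)]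
      _ = _ := by rw [hE]; ring
  · set X := (A ×ˢ I).filter fun q => ¬ ((p q.2).eval q.1 ∈ T → (p q.2).eval (π q.1) ∈ T →
        ((p q.2).eval q.1, (p q.2).eval (π q.1)) ∈ closePairs T L) with hX
    have h1 : X.card * L ≤ I.card * (m * (d * M)) := by
      calc X.card * L ≤ ∑ q ∈ X, gap T ((p q.2).eval q.1) ((p q.2).eval (π q.1)) := by
            rw [← smul_eq_mul]
            refine Finset.card_nsmul_le_sum _ _ _ fun q hq => ?_
            have := (Finset.mem_filter.1 hq).2
            push Not at this
            obtain ⟨h2, h3, h4⟩ := this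
            by_contra h5
            exact h4 (Finset.mem_filter.2 ⟨Finset.mem_product.2 ⟨h2, h3⟩, (not_le.1 h5).le⟩)
        _ ≤ ∑ q ∈ A ×ˢ I, gap T ((p q.2).eval q.1) ((p q.2).eval (π q.1)) :=
            Finset.sum_le_sum_of_subset (Finset.filter_subset _ _)
        _ = ∑ i ∈ I, ∑ a ∈ A, gap T ((p i).eval a) ((p i).eval (π a)) :=
            Finset.sum_product_right _ _ _
        _ ≤ _ := by
            refine (Finset.sum_le_card_nsmul _ _ _ fun i _ =>
              sum_gap_le A π M hπ hM T (hp i)).trans (by simp [hm])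
    rcases Nat.eq_zero_or_pos m with h0 | h0
    · have : X.card = 0 := by
        rw [h0] at h1
        have : 0 < L := Nat.succ_pos _
        rcases Nat.eq_zero_or_pos X.card with h | h
        · exact h
        · have := Nat.mul_pos h this
          omega
      omega
    · have h2 : X.card * (E * m) ≤ (n * I.card) * (m * ((d + 1) * (M + 1))) := by
        calc X.card * (E * m) ≤ X.card * (L * n) := Nat.mul_le_mul_left _ hLn'
          _ = n * (X.card * L) := by ring
          _ ≤ n * (I.card * (m * (d * M))) := Nat.mul_le_mul_left _ h1
          _ ≤ n * (I.card * (m * ((d + 1) * (M + 1)))) := by gcongr <;> omega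
          _ = _ := by ring
      refine Nat.le_of_mul_le_mul_right (c := m * ((d + 1) * (M + 1))) ?_ (by positivity)
      calc 4 * X.card * (m * ((d + 1) * (M + 1))) = X.card * (E * m) := by rw [hE]; ring
        _ ≤ _ := h2

/-- The numerical conclusion of the counting arguments. -/
theorem exists_const_of_cube_le (C n₀ : ℕ) : ∃ c : ℝ, 0 < c ∧ ∀ n m : ℕ, (0 < n → 0 < m) →
    (n₀ ≤ n → n ^ 3 ≤ C * (m * (m + n))) → c * (n : ℝ) ^ ((3 : ℝ) / 2) ≤ m := by
  set E : ℝ := 2 * (C + 1) + (n₀ + 1) ^ 3 with hE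
  have hE1 : 1 ≤ E := by
    have : (0:ℝ) ≤ (n₀ + 1) ^ 3 := by positivity
    have : (0:ℝ) ≤ C := by positivity
    linarith
  refine ⟨1 / E, by positivity, fun n m hnm h => ?_⟩
  rcases Nat.eq_zero_or_pos n with rfl | hn
  · rw [Nat.cast_zero, Real.zero_rpow (by norm_num), mul_zero]; positivity
  have hm : (1 : ℝ) ≤ m := by exact_mod_cast hnm hn
  have hn1 : (1 : ℝ) ≤ n := by exact_mod_cast hn
  have hsq : ((n : ℝ) ^ ((3 : ℝ) / 2)) ^ 2 = (n : ℝ) ^ 3 := by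
    rw [← Real.rpow_natCast, ← Real.rpow_mul (by positivity)]
    norm_num
  rw [div_mul_eq_mul_div, one_mul, div_le_iff₀ (by positivity)]
  refine le_of_sq_le_sq ?_ (by positivity)
  rw [hsq]
  by_cases hn0 : n₀ ≤ n
  · have h3 : (n : ℝ) ^ 3 ≤ C * (m * (m + n)) := by exact_mod_cast h hn0
    have hEC : 2 * ((C : ℝ) + 1) ≤ E := by
      have : (0:ℝ) ≤ (n₀ + 1) ^ 3 := by positivity
      linarith
    have hC0 : (0 : ℝ) ≤ C := by positivity
    rcases le_total n m with hle | hle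
    · have hle' : (n : ℝ) ≤ m := by exact_mod_cast hle
      calc (n : ℝ) ^ 3 ≤ C * (m * (m + m)) := h3.trans (by gcongr)
        _ = (2 * C) * m ^ 2 := by ring
        _ ≤ E ^ 2 * m ^ 2 := by gcongr; nlinarith
        _ = _ := by ring
    · have hle' : (m : ℝ) ≤ n := by exact_mod_cast hle
      have h4 : (n : ℝ) ^ 2 ≤ E * m := by
        have : (n : ℝ) * n ^ 2 ≤ n * (2 * C * m) := by
          calc (n : ℝ) * (n : ℝ) ^ 2 = (n : ℝ) ^ 3 := by ring
            _ ≤ (C : ℝ) * (m * (n + n)) := h3.trans (by gcongr)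
            _ = _ := by ring
        have := le_of_mul_le_mul_left this (by positivity)
        nlinarith
      calc (n : ℝ) ^ 3 ≤ n ^ 4 := pow_le_pow_right₀ hn1 (by norm_num)
        _ = (n ^ 2) ^ 2 := by ring
        _ ≤ (E * m) ^ 2 := by gcongr
        _ = _ := by ring
  · have hle : (n : ℝ) ≤ n₀ + 1 := by
      have : n ≤ n₀ + 1 := by omega
      exact_mod_cast this
    calc (n : ℝ) ^ 3 ≤ (n₀ + 1) ^ 3 := by gcongr
      _ ≤ E := by
        have : (0:ℝ) ≤ C := by positivity
        linarith
      _ ≤ E ^ 2 * m ^ 2 := by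
        have : (1:ℝ) ≤ m ^ 2 := one_le_pow₀ hm
        have : E ≤ E ^ 2 := by nlinarith
        nlinarith
      _ = _ := by ring

/-! ### Degree bounds and restrictions to coordinate lines -/

theorem totalDegree_aeval_le {σ τ : Type*} (F : σ → MvPolynomial τ ℝ) {d : ℕ}
    (hF : ∀ i, (F i).totalDegree ≤ d) (P : MvPolynomial σ ℝ) :
    (aeval F P).totalDegree ≤ P.totalDegree * d := by
  rw [aeval_def, eval₂_eq]
  refine totalDegree_finsetSum_le fun s hs => ?_
  refine (totalDegree_mul _ _).trans ?_
  rw [algebraMap_eq, totalDegree_C, zero_add]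
  refine (totalDegree_finsetProd _ _).trans ?_
  calc ∑ i ∈ s.support, (F i ^ s i).totalDegree ≤ ∑ i ∈ s.support, s i * d :=
        Finset.sum_le_sum fun i _ => (totalDegree_pow _ _).trans (Nat.mul_le_mul_left _ (hF i))
    _ = (∑ i ∈ s.support, s i) * d := (Finset.sum_mul _ _ _).symm
    _ ≤ P.totalDegree * d := Nat.mul_le_mul_right _ (le_totalDegree hs)

theorem eval_aeval {σ τ : Type*} (F : σ → MvPolynomial τ ℝ) (P : MvPolynomial σ ℝ) (v : τ → ℝ) :
    eval v (aeval F P) = eval (fun i => eval v (F i)) P := by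
  have h : (eval v).comp (aeval F : MvPolynomial σ ℝ →ₐ[ℝ] _).toRingHom =
      eval (fun i => eval v (F i)) := by
    ext <;> simp
  exact congrArg (fun φ : MvPolynomial σ ℝ →+* ℝ => φ P) h

/-- The restriction of a polynomial to a line parallel to a coordinate axis. -/
theorem exists_slice {σ : Type*} [DecidableEq σ] (G : MvPolynomial σ ℝ) (v : σ → ℝ) (i : σ) :
    ∃ q : Polynomial ℝ, q.natDegree ≤ G.totalDegree ∧
      ∀ t, q.eval t = eval (Function.update v i t) G := by
  refine ⟨aeval (fun j => if j = i then Polynomial.X else Polynomial.C (v j)) G, ?_, fun t => ?_⟩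
  · rw [aeval_def, eval₂_eq]
    refine Polynomial.natDegree_sum_le_of_forall_le _ _ fun s hs => ?_
    refine Polynomial.natDegree_mul_le.trans ?_
    rw [Polynomial.algebraMap_eq, Polynomial.natDegree_C, zero_add]
    refine (Polynomial.natDegree_prod_le _ _).trans ?_
    refine (Finset.sum_le_sum fun j _ => ?_).trans (le_totalDegree hs)
    refine Polynomial.natDegree_pow_le.trans ?_
    split_ifs <;> simp
  · have h : (Polynomial.evalRingHom t).comp
        (aeval (fun j => if j = i then Polynomial.X else Polynomial.C (v j)) :
          MvPolynomial σ ℝ →ₐ[ℝ] Polynomial ℝ).toRingHom = eval (Function.update v i t) := by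
      ext j
      · simp
      · by_cases hj : j = i
        · subst hj; simp
        · simp [hj]
    exact congrArg (fun φ : MvPolynomial σ ℝ →+* ℝ => φ G) h

/-- On a coordinate line on which it does not vanish identically, a polynomial has few zeros. -/
theorem exists_zeros_finset {σ : Type*} [DecidableEq σ] {G : MvPolynomial σ ℝ} {D : ℕ}
    (hG : G.totalDegree ≤ D) (v : σ → ℝ) (i : σ) (hv : eval v G ≠ 0) :
    ∃ S : Finset ℝ, S.card ≤ D ∧ ∀ t, eval (Function.update v i t) G = 0 → t ∈ S := by
  obtain ⟨q, hq, hqe⟩ := exists_slice G v i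
  have hq0 : q ≠ 0 := by
    rintro rfl
    apply hv
    have := hqe (v i)
    simpa using this.symm
  refine ⟨q.roots.toFinset, (Multiset.toFinset_card_le _).trans
    ((Polynomial.card_roots' q).trans (hq.trans hG)), fun t ht => ?_⟩
  rw [Multiset.mem_toFinset, Polynomial.mem_roots hq0, Polynomial.IsRoot, hqe, ht]

/-- A polynomial vanishing at more points of a coordinate line than its degree vanishes on it. -/
theorem eval_update_eq_zero_of_card_lt {σ : Type*} [DecidableEq σ] {G : MvPolynomial σ ℝ} {D : ℕ}
    (hG : G.totalDegree ≤ D) (v : σ → ℝ) (i : σ) (S : Finset ℝ) (hS : D < S.card)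
    (h : ∀ t ∈ S, eval (Function.update v i t) G = 0) (t : ℝ) :
    eval (Function.update v i t) G = 0 := by
  by_contra hne
  obtain ⟨Z, hZ, hmem⟩ := exists_zeros_finset hG (Function.update v i t) i hne
  have : S ⊆ Z := fun s hs => hmem s (by simpa using h s hs)
  exact absurd (Finset.card_le_card this) (by omega)

/-! ### Elimination -/

/-- `k + 1` polynomials in `k` variables satisfy an algebraic relation of bounded degree. -/
theorem exists_annihilator (k d : ℕ) : ∃ D : ℕ, ∀ F : Fin (k + 1) → MvPolynomial (Fin k) ℝ,
    (∀ i, (F i).totalDegree ≤ d) →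
      ∃ P : MvPolynomial (Fin (k + 1)) ℝ, P ≠ 0 ∧ P.totalDegree ≤ D ∧ aeval F P = 0 := by
  set N := ((k + 1) * d + 1) ^ k + 1 with hN
  set M := (k + 1) * N * d + 1 with hM
  refine ⟨(k + 1) * N, fun F hF => ?_⟩
  let mon : (Fin (k + 1) → Fin N) → (Fin (k + 1) →₀ ℕ) :=
    fun e => Finsupp.equivFunOnFinite.symm fun i => (e i : ℕ)
  let box : (Fin k → Fin M) → (Fin k →₀ ℕ) :=
    fun e => Finsupp.equivFunOnFinite.symm fun i => (e i : ℕ)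
  have hmon : Function.Injective mon := fun e e' h => by
    funext i
    exact Fin.ext (DFunLike.congr_fun h i)
  let poly : ((Fin (k + 1) → Fin N) → ℝ) →ₗ[ℝ] MvPolynomial (Fin (k + 1)) ℝ :=
    ∑ e, (monomial (mon e)).comp (LinearMap.proj e)
  have hpoly : ∀ c, poly c = ∑ e, monomial (mon e) (c e) := fun c => by
    simp [poly, LinearMap.sum_apply]
  let L : ((Fin (k + 1) → Fin N) → ℝ) →ₗ[ℝ] ((Fin k → Fin M) → ℝ) :=
    LinearMap.pi fun m => (lcoeff ℝ (box m)).comp ((aeval F).toLinearMap.comp poly)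
  have hdeg : ∀ c, (poly c).totalDegree ≤ (k + 1) * N := fun c => by
    rw [hpoly]
    refine totalDegree_finsetSum_le fun e _ => (totalDegree_monomial_le _ _).trans ?_
    rw [Finsupp.sum_fintype _ _ (fun _ => rfl)]
    refine (Finset.sum_le_card_nsmul _ _ N fun i _ => (e i).2.le).trans ?_
    simp
  have hlt : Module.finrank ℝ ((Fin k → Fin M) → ℝ) <
      Module.finrank ℝ ((Fin (k + 1) → Fin N) → ℝ) := by
    simp only [Module.finrank_fintype_fun_eq_card, Fintype.card_fun, Fintype.card_fin]
    have h1 : M ≤ ((k + 1) * d + 1) * N := by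
      have : 1 ≤ N := by omega
      rw [hM]; nlinarith
    calc M ^ k ≤ (((k + 1) * d + 1) * N) ^ k := Nat.pow_le_pow_left h1 k
      _ = ((k + 1) * d + 1) ^ k * N ^ k := Nat.mul_pow _ _ _
      _ < N * N ^ k := Nat.mul_lt_mul_of_pos_right (by omega) (pow_pos (by omega) k)
      _ = N ^ (k + 1) := (pow_succ' N k).symm
  obtain ⟨c, hc, hc0⟩ :=
    (Submodule.ne_bot_iff _).1 (LinearMap.ker_ne_bot_of_finrank_lt (f := L) hlt)
  refine ⟨poly c, ?_, hdeg c, ?_⟩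
  · intro h0
    apply hc0
    funext e
    have h1 := congrArg (coeff (mon e)) h0
    rw [hpoly, coeff_sum, Finset.sum_eq_single e] at h1
    · simpa using h1
    · intro e' _ hne
      rw [coeff_monomial, if_neg fun h => hne (hmon h)]
    · simp
  · ext m
    rw [coeff_zero]
    have hle := totalDegree_aeval_le F hF (poly c)
    by_cases hm : ∀ i, m i < M
    · have h1 := congrFun (LinearMap.mem_ker.1 hc) fun i => ⟨m i, hm i⟩
      have h2 : box (fun i => ⟨m i, hm i⟩) = m := by ext i; rfl
      simpa [L, h2] using h1
    · push Not at hm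
      obtain ⟨i, hi⟩ := hm
      apply coeff_eq_zero_of_totalDegree_lt
      have h3 : (poly c).totalDegree * d ≤ (k + 1) * N * d := Nat.mul_le_mul_right _ (hdeg c)
      have h4 : m i ≤ ∑ j ∈ m.support, m j := by
        by_cases h5 : i ∈ m.support
        · exact Finset.single_le_sum (f := fun j => m j) (fun _ _ => Nat.zero_le _) h5
        · simp [Finsupp.notMem_support_iff.1 h5]
      omega

theorem derivation_aeval {σ A : Type*} [Fintype σ] [CommRing A] [Algebra ℝ A]
    (δ : Derivation ℝ A A) (F : σ → A) (Q : MvPolynomial σ ℝ) :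
    δ (aeval F Q) = ∑ i, aeval F (pderiv i Q) * δ (F i) := by
  classical
  induction Q using MvPolynomial.induction_on with
  | C a => simp
  | add p q hp hq => simp [hp, hq, add_mul, Finset.sum_add_distrib]
  | mul_X p j hp =>
    simp only [map_mul, aeval_X, Derivation.leibniz, hp, smul_eq_mul, pderiv_X, map_add,
      add_mul, Finset.sum_add_distrib, Finset.mul_sum]
    congr 1
    · rw [Finset.sum_eq_single j]
      · simp
      · intro b _ hb
        simp [hb]
      · simp
    · exact Finset.sum_congr rfl fun i _ => by ring

theorem totalDegree_pderiv_lt {σ : Type*} {Q : MvPolynomial σ ℝ} (i : σ) (h : pderiv i Q ≠ 0) :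
    (pderiv i Q).totalDegree < Q.totalDegree := by
  obtain ⟨m, hm, hdeg⟩ := Finset.exists_mem_eq_sup _ (support_nonempty.2 h)
    fun s : σ →₀ ℕ => s.sum fun _ e => e
  have hc : coeff (m + Finsupp.single i 1) Q ≠ 0 := by
    intro h0
    rw [mem_support_iff, coeff_pderiv, h0, zero_mul] at hm
    exact hm rfl
  have hle := le_totalDegree (mem_support_iff.2 hc)
  rw [Finsupp.sum_add_index' (fun _ => rfl) (fun _ _ _ => rfl), Finsupp.sum_single_index rfl] at hle
  rw [totalDegree, hdeg]
  omega

/-- If polynomials are algebraically dependent, the rows of their Jacobian matrix are dependent. -/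
theorem exists_jacobian_relation {σ τ : Type*} [Fintype σ] (F : σ → MvPolynomial τ ℝ)
    (hF : ¬ AlgebraicIndependent ℝ F) :
    ∃ p : σ → MvPolynomial τ ℝ, p ≠ 0 ∧ ∀ j, ∑ i, p i * pderiv j (F i) = 0 := by
  rw [algebraicIndependent_iff] at hF
  push Not at hF
  obtain ⟨Q, ⟨hQ, hQ0⟩, hmin⟩ := exists_minimalFor_of_wellFoundedLT
    (fun Q : MvPolynomial σ ℝ => aeval F Q = 0 ∧ Q ≠ 0) totalDegree hF
  refine ⟨fun i => aeval F (pderiv i Q), fun hp => ?_, fun j => ?_⟩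
  · have hall : ∀ i, pderiv i Q = 0 := fun i => by
      by_contra hne
      have := hmin ⟨congrFun hp i, hne⟩ (totalDegree_pderiv_lt i hne).le
      exact absurd (totalDegree_pderiv_lt i hne) (by omega)
    have hdeg : Q.totalDegree = 0 := by
      rw [totalDegree, Finset.sup_eq_zero]
      intro m hm
      rw [Finsupp.sum_fintype _ _ (fun _ => rfl)]
      refine Finset.sum_eq_zero fun i _ => ?_
      by_contra hmi
      have h1 := congrArg (coeff (m - Finsupp.single i 1)) (hall i)
      rw [coeff_pderiv, coeff_zero, tsub_add_cancel_of_le (by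
        rw [Finsupp.single_le_iff]; omega)] at h1
      rcases mul_eq_zero.1 h1 with h2 | h2
      · exact mem_support_iff.1 hm h2
      · norm_cast at h2
    rw [totalDegree_eq_zero_iff_eq_C] at hdeg
    rw [hdeg, aeval_C, algebraMap_eq, C_eq_zero] at hQ
    rw [hQ, C_0] at hdeg
    exact hQ0 hdeg
  · rw [← derivation_aeval, hQ, map_zero]

/-- Generically, `k` algebraically independent polynomials in `k` variables determine the value of
any other polynomial up to boundedly many choices. -/
theorem exists_elimination (k d : ℕ) : ∃ D : ℕ, ∀ F : Fin k → MvPolynomial (Fin k) ℝ,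
    (∀ i, (F i).totalDegree ≤ d) → AlgebraicIndependent ℝ F →
    ∀ G : MvPolynomial (Fin k) ℝ, G.totalDegree ≤ d →
    ∃ P : MvPolynomial (Fin (k + 1)) ℝ, ∃ w : MvPolynomial (Fin k) ℝ, w ≠ 0 ∧
      P.totalDegree ≤ D ∧ w.totalDegree ≤ D ∧
      (∀ v, eval (Fin.cons (eval v G) fun i => eval v (F i)) P = 0) ∧
      ∀ v, eval v w ≠ 0 → ∃ S : Finset ℝ, S.card ≤ D ∧
        ∀ x, eval (Fin.cons x fun i => eval v (F i)) P = 0 → x ∈ S := by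
  obtain ⟨D, hD⟩ := exists_annihilator k d
  refine ⟨D + D * d, fun F hF hind G hG => ?_⟩
  obtain ⟨P, hP0, hPdeg, hP⟩ := hD (Fin.cons G F) (Fin.cases hG hF)
  set R := finSuccEquiv ℝ k P with hR
  have hR0 : R ≠ 0 := by simpa [hR] using hP0
  have hlc : R.leadingCoeff.totalDegree + R.natDegree ≤ P.totalDegree :=
    totalDegree_coeff_finSuccEquiv_add_le P R.natDegree
      (by simpa [← hR, Polynomial.coeff_natDegree] using hR0)
  have heval : ∀ (x : ℝ) (θ : Fin k → ℝ),
      eval (Fin.cons x θ) P = (R.map (eval θ)).eval x := fun x θ =>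
    eval_eq_eval_mv_eval' θ x P
  refine ⟨P, aeval F R.leadingCoeff, ?_, by omega, ?_, fun v => ?_, fun v hv => ?_⟩
  · intro h
    exact Polynomial.leadingCoeff_ne_zero.2 hR0 (algebraicIndependent_iff.1 hind _ h)
  · refine (totalDegree_aeval_le F hF _).trans ?_
    have : R.leadingCoeff.totalDegree * d ≤ D * d := Nat.mul_le_mul_right _ (by omega)
    omega
  · have h1 := congrArg (eval v) hP
    rw [eval_aeval, map_zero] at h1
    rw [← h1]
    congr 2
    funext i
    refine Fin.cases ?_ (fun i => ?_) i <;> simp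
  · rw [eval_aeval] at hv
    set q := R.map (eval fun i => eval v (F i)) with hq
    have hq0 : q ≠ 0 := by
      intro h
      apply hv
      have := congrArg (fun r => Polynomial.coeff r R.natDegree) h
      simpa [hq, Polynomial.coeff_map] using this
    refine ⟨q.roots.toFinset, (Multiset.toFinset_card_le _).trans
      ((Polynomial.card_roots' q).trans (Polynomial.natDegree_map_le.trans (by omega))),
      fun x hx => ?_⟩
    rw [Multiset.mem_toFinset, Polynomial.mem_roots hq0, Polynomial.IsRoot, ← heval, hx]

/-! ### Expansion for polynomials in three variables -/

theorem update_vec_zero (a b c e t : ℝ) : Function.update ![a, b, c, e] 0 t = ![t, b, c, e] := by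
  ext i; fin_cases i <;> simp

theorem update_vec_one (a b c e t : ℝ) : Function.update ![a, b, c, e] 1 t = ![a, t, c, e] := by
  ext i; fin_cases i <;> simp

theorem update_vec_two (a b c e t : ℝ) : Function.update ![a, b, c, e] 2 t = ![a, b, t, e] := by
  ext i; fin_cases i <;> simp

theorem update_vec_three (a b c e t : ℝ) : Function.update ![a, b, c, e] 3 t = ![a, b, c, t] := by
  ext i; fin_cases i <;> simp

theorem exists_eval_ne_zero {w : MvPolynomial (Fin 4) ℝ} (hw : w ≠ 0) :
    ∃ x u y z : ℝ, eval ![x, u, y, z] w ≠ 0 := by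
  by_contra! h
  refine hw (MvPolynomial.funext fun v => ?_)
  have : v = ![v 0, v 1, v 2, v 3] := by
    ext i; fin_cases i <;> simp
  rw [this, h, map_zero]

theorem exists_good_partner {w : MvPolynomial (Fin 4) ℝ} {D : ℕ} (hw : w.totalDegree ≤ D)
    {x u y z : ℝ} (h0 : eval ![x, u, y, z] w ≠ 0) (A : Finset ℝ) :
    ∃ A' ⊆ A, A.card ≤ A'.card + (2 * D + 1) ∧ ∃ π : ℝ → ℝ,
      (∀ a ∈ A', π a ∈ A ∧ a < π a ∧ eval ![a, π a, y, z] w ≠ 0) ∧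
      ∀ r, (A'.filter fun a => a ≤ r ∧ r ≤ π a).card ≤ D + 2 := by
  obtain ⟨Z, hZ, hZmem⟩ := exists_zeros_finset hw _ 0 h0
  have hbad : ∀ a, ∃ S : Finset ℝ, a ∉ Z → S.card ≤ D ∧
      ∀ t, eval ![a, t, y, z] w = 0 → t ∈ S := fun a => by
    by_cases ha : a ∈ Z
    · exact ⟨∅, fun h => absurd ha h⟩
    · have h1 : eval ![a, u, y, z] w ≠ 0 := fun h => ha (hZmem a (by rwa [update_vec_zero]))
      obtain ⟨S, hS, hSmem⟩ := exists_zeros_finset hw _ 1 h1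
      exact ⟨S, fun _ => ⟨hS, fun t ht => hSmem t (by rwa [update_vec_one])⟩⟩
  choose bad hbad using hbad
  obtain ⟨A', hA', hcard, π, hπ, hov⟩ := exists_partner A (A \ Z) Finset.sdiff_subset (D + 1) bad
    fun a ha => Nat.lt_succ_of_le (hbad a (Finset.mem_sdiff.1 ha).2).1
  refine ⟨A', hA'.trans Finset.sdiff_subset, ?_, π, fun a ha => ?_, hov⟩
  · have := Finset.le_card_sdiff Z A
    omega
  · obtain ⟨h1, h2, h3⟩ := hπ a ha
    exact ⟨h1, h2, fun h => h3 ((hbad a (Finset.mem_sdiff.1 (hA' ha)).2).2 _ h)⟩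

theorem card_zeros_le {w : MvPolynomial (Fin 4) ℝ} {D : ℕ} (hw : w.totalDegree ≤ D)
    {x u y z : ℝ} (h0 : eval ![x, u, y, z] w ≠ 0) (B C : Finset ℝ) :
    ((B ×ˢ C).filter fun q => eval ![x, u, q.1, q.2] w = 0).card ≤ D * (B.card + C.card) := by
  obtain ⟨Z, hZ, hZmem⟩ := exists_zeros_finset hw _ 2 h0
  have hbad : ∀ b, ∃ S : Finset ℝ, b ∉ Z → S.card ≤ D ∧
      ∀ t, eval ![x, u, b, t] w = 0 → t ∈ S := fun b => by
    by_cases hb : b ∈ Z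
    · exact ⟨∅, fun h => absurd hb h⟩
    · have h1 : eval ![x, u, b, z] w ≠ 0 := fun h => hb (hZmem b (by rwa [update_vec_two]))
      obtain ⟨S, hS, hSmem⟩ := exists_zeros_finset hw _ 3 h1
      exact ⟨S, fun _ => ⟨hS, fun t ht => hSmem t (by rwa [update_vec_three])⟩⟩
  choose S hS using hbad
  have hsub : ((B ×ˢ C).filter fun q => eval ![x, u, q.1, q.2] w = 0) ⊆
      (Z ×ˢ C) ∪ (B \ Z).biUnion fun b => (S b).image fun c => (b, c) := by
    rintro ⟨b, c⟩ h
    simp only [Finset.mem_filter, Finset.mem_product] at h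
    simp only [Finset.mem_union, Finset.mem_product, Finset.mem_biUnion, Finset.mem_sdiff,
      Finset.mem_image, Prod.mk.injEq]
    by_cases hb : b ∈ Z
    · exact Or.inl ⟨hb, h.1.2⟩
    · exact Or.inr ⟨b, ⟨h.1.1, hb⟩, c, (hS b hb).2 c h.2, rfl, rfl⟩
  have h1 := (Finset.card_le_card hsub).trans (Finset.card_union_le _ _)
  have h2 : ((B \ Z).biUnion fun b => (S b).image fun c => (b, c)).card ≤ (B \ Z).card * D :=
    Finset.card_biUnion_le_card_mul _ _ _ fun b hb =>
      Finset.card_image_le.trans (hS b (Finset.mem_sdiff.1 hb).2).1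
  have h3 : (B \ Z).card ≤ B.card := Finset.card_le_card Finset.sdiff_subset
  rw [Finset.card_product] at h1
  nlinarith

theorem algebraicIndependent_of_pderiv {f : MvPolynomial (Fin 3) ℝ} {x u y z : ℝ}
    (h : eval ![x, y, z] (pderiv 1 f) * eval ![u, y, z] (pderiv 2 f) ≠
      eval ![u, y, z] (pderiv 1 f) * eval ![x, y, z] (pderiv 2 f)) :
    AlgebraicIndependent ℝ (![X 0, X 1, rename ![0, 2, 3] f, rename ![1, 2, 3] f] :
      Fin 4 → MvPolynomial (Fin 4) ℝ) := by
  by_contra hF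
  obtain ⟨p, hp, hrel⟩ := exists_jacobian_relation _ hF
  have hi1 : Function.Injective (![0, 2, 3] : Fin 3 → Fin 4) := by decide
  have hi2 : Function.Injective (![1, 2, 3] : Fin 3 → Fin 4) := by decide
  have h12 : pderiv 2 (rename (![0, 2, 3] : Fin 3 → Fin 4) f) =
      rename (![0, 2, 3] : Fin 3 → Fin 4) (pderiv 1 f) := pderiv_rename hi1 1 f
  have h13 : pderiv 3 (rename (![0, 2, 3] : Fin 3 → Fin 4) f) =
      rename (![0, 2, 3] : Fin 3 → Fin 4) (pderiv 2 f) := pderiv_rename hi1 2 f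
  have h22 : pderiv 2 (rename (![1, 2, 3] : Fin 3 → Fin 4) f) =
      rename (![1, 2, 3] : Fin 3 → Fin 4) (pderiv 1 f) := pderiv_rename hi2 1 f
  have h23 : pderiv 3 (rename (![1, 2, 3] : Fin 3 → Fin 4) f) =
      rename (![1, 2, 3] : Fin 3 → Fin 4) (pderiv 2 f) := pderiv_rename hi2 2 f
  have r0 := hrel 0
  have r1 := hrel 1
  have r2 := hrel 2
  have r3 := hrel 3
  simp [Fin.sum_univ_four, pderiv_X, h12, h13, h22, h23] at r0 r1 r2 r3
  set a1 := rename (![0, 2, 3] : Fin 3 → Fin 4) (pderiv 1 f) with ha1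
  set a2 := rename (![0, 2, 3] : Fin 3 → Fin 4) (pderiv 2 f) with ha2
  set b1 := rename (![1, 2, 3] : Fin 3 → Fin 4) (pderiv 1 f) with hb1
  set b2 := rename (![1, 2, 3] : Fin 3 → Fin 4) (pderiv 2 f) with hb2
  have hΔ : a1 * b2 - b1 * a2 ≠ 0 := fun h0 => h (by
    have := congrArg (eval ![x, u, y, z]) h0
    have e1 : (![x, u, y, z] ∘ (![0, 2, 3] : Fin 3 → Fin 4)) = ![x, y, z] := by
      ext i; fin_cases i <;> rfl
    have e2 : (![x, u, y, z] ∘ (![1, 2, 3] : Fin 3 → Fin 4)) = ![u, y, z] := by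
      ext i; fin_cases i <;> rfl
    simpa [ha1, ha2, hb1, hb2, eval_rename, e1, e2, sub_eq_zero] using this)
  have p2 : p 2 = 0 := by
    have : p 2 * (a1 * b2 - b1 * a2) = 0 := by linear_combination b2 * r2 - b1 * r3
    exact (mul_eq_zero.1 this).resolve_right hΔ
  have p3 : p 3 = 0 := by
    have : p 3 * (a1 * b2 - b1 * a2) = 0 := by linear_combination a1 * r3 - a2 * r2
    exact (mul_eq_zero.1 this).resolve_right hΔ
  refine hp (funext fun i => ?_)
  simp only [p2, p3, zero_mul, add_zero] at r0 r1
  fin_cases i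
  · exact r0
  · simpa using r1
  · exact p2
  · exact p3

theorem exists_expansion_three (d : ℕ) : ∃ c : ℝ, 0 < c ∧ ∀ f : MvPolynomial (Fin 3) ℝ,
    f.totalDegree ≤ d → ∀ x u y z : ℝ, eval ![x, y, z] (pderiv 1 f) * eval ![u, y, z] (pderiv 2 f) ≠
      eval ![u, y, z] (pderiv 1 f) * eval ![x, y, z] (pderiv 2 f) →
    ∀ (A B C T : Finset ℝ) (n : ℕ), A.card = n → B.card = n → C.card = n →
      (∀ a ∈ A, ∀ b ∈ B, ∀ c ∈ C, eval ![a, b, c] f ∈ T) →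
      c * (n : ℝ) ^ ((3 : ℝ) / 2) ≤ T.card := by
  obtain ⟨D, hD⟩ := exists_elimination 4 (d + 1)
  obtain ⟨c, hc, hcn⟩ := exists_const_of_cube_le
    (4 * D ^ 2 * (8 * (d + 1) * (2 * D + 2 + 1) + 4)) (16 * D + 4)
  refine ⟨c, hc, fun f hf x u y z hne A B C T n hA hB hC hT => hcn n T.card ?_ ?_⟩
  · intro hn
    obtain ⟨a, ha⟩ := Finset.card_pos.1 (hA ▸ hn)
    obtain ⟨b, hb⟩ := Finset.card_pos.1 (hB ▸ hn)
    obtain ⟨c, hc⟩ := Finset.card_pos.1 (hC ▸ hn)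
    exact Finset.card_pos.2 ⟨_, hT a ha b hb c hc⟩
  intro hn
  have hindep := algebraicIndependent_of_pderiv hne
  set F : Fin 4 → MvPolynomial (Fin 4) ℝ :=
    ![X 0, X 1, rename ![0, 2, 3] f, rename ![1, 2, 3] f] with hFdef
  have hFdeg : ∀ i, (F i).totalDegree ≤ d + 1 := fun i => by
    fin_cases i
    · simp [F]
    · simp [F]
    · exact ((totalDegree_rename_le _ _).trans hf).trans (Nat.le_succ d)
    · exact ((totalDegree_rename_le _ _).trans hf).trans (Nat.le_succ d)
  have hFval : ∀ a u b c : ℝ, (fun i => eval ![a, u, b, c] (F i)) =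
      ![a, u, eval ![a, b, c] f, eval ![u, b, c] f] := fun a u b c => by
    have e1 : (![a, u, b, c] ∘ (![0, 2, 3] : Fin 3 → Fin 4)) = ![a, b, c] := by
      ext i; fin_cases i <;> rfl
    have e2 : (![a, u, b, c] ∘ (![1, 2, 3] : Fin 3 → Fin 4)) = ![u, b, c] := by
      ext i; fin_cases i <;> rfl
    ext i
    fin_cases i <;> simp [F, eval_rename, e1, e2]
  obtain ⟨P₁, w₁, hw₁, -, hw₁d, hP₁, hS₁⟩ := hD F hFdeg hindep (X 2) (by simp)
  obtain ⟨P₂, w₂, hw₂, -, hw₂d, hP₂, hS₂⟩ := hD F hFdeg hindep (X 3) (by simp)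
  obtain ⟨x₀, u₀, y₀, z₀, h0⟩ := exists_eval_ne_zero (mul_ne_zero hw₁ hw₂)
  have hwd : (w₁ * w₂).totalDegree ≤ 2 * D := (totalDegree_mul _ _).trans (by omega)
  obtain ⟨A', hA', hcard, π, hπ, hov⟩ := exists_good_partner hwd h0 A
  have hslice : ∀ q : ℝ × ℝ, ∃ p : Polynomial ℝ, p.natDegree ≤ d ∧
      ∀ t, p.eval t = eval ![t, q.1, q.2] f := fun q => by
    obtain ⟨p, hp, hpe⟩ := exists_slice f ![0, q.1, q.2] 0
    refine ⟨p, hp.trans hf, fun t => (hpe t).trans ?_⟩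
    congr 2
    ext i; fin_cases i <;> simp
  choose p hpd hpe using hslice
  have hn0 : 0 < n := by omega
  obtain ⟨Q, hQ, hfar⟩ := exists_few_far_pairs A' π _ (fun a ha => (hπ a ha).2.1) hov T
    (B ×ˢ C) p hpd hn0
  set far := (A' ×ˢ (B ×ˢ C)).filter fun q => ¬ ((p q.2).eval q.1 ∈ T →
    (p q.2).eval (π q.1) ∈ T → ((p q.2).eval q.1, (p q.2).eval (π q.1)) ∈ Q) with hfardef
  let degen : ℝ → Finset (ℝ × ℝ) := fun a =>
    (B ×ˢ C).filter fun q => eval ![a, π a, q.1, q.2] (w₁ * w₂) = 0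
  let good : ℝ → Finset (ℝ × ℝ) := fun a =>
    (B ×ˢ C).filter fun q => eval ![a, π a, q.1, q.2] (w₁ * w₂) ≠ 0 ∧
      (eval ![a, q.1, q.2] f, eval ![π a, q.1, q.2] f) ∈ Q
  have hdegen : ∀ a ∈ A', (degen a).card ≤ 2 * D * (n + n) := fun a ha => by
    have := card_zeros_le hwd (hπ a ha).2.2 B C
    rwa [hB, hC] at this
  have hgood : ∀ a ∈ A', (good a).card ≤ D ^ 2 * Q.card := fun a ha => by
    refine Finset.card_le_mul_card_image_of_maps_to
      (f := fun q : ℝ × ℝ => (eval ![a, q.1, q.2] f, eval ![π a, q.1, q.2] f))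
      (fun q hq => (Finset.mem_filter.1 hq).2.2) _ fun t ht => ?_
    rcases Finset.eq_empty_or_nonempty
      ((good a).filter fun q => (eval ![a, q.1, q.2] f, eval ![π a, q.1, q.2] f) = t) with h | h
    · rw [h]; simp
    obtain ⟨q₀, hq₀⟩ := h
    obtain ⟨hq₀g, hq₀t⟩ := Finset.mem_filter.1 hq₀
    have hne0 := (Finset.mem_filter.1 hq₀g).2.1
    rw [map_mul] at hne0
    obtain ⟨S₁, hS₁c, hS₁m⟩ := hS₁ _ (left_ne_zero_of_mul hne0)
    obtain ⟨S₂, hS₂c, hS₂m⟩ := hS₂ _ (right_ne_zero_of_mul hne0)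
    have hsub : ((good a).filter
        fun q => (eval ![a, q.1, q.2] f, eval ![π a, q.1, q.2] f) = t) ⊆ S₁ ×ˢ S₂ := by
      intro q hq
      have hqt := (Finset.mem_filter.1 hq).2
      have heq : (fun i => eval ![a, π a, q₀.1, q₀.2] (F i)) =
          fun i => eval ![a, π a, q.1, q.2] (F i) := by
        rw [← hqt, Prod.mk.injEq] at hq₀t
        rw [hFval, hFval, hq₀t.1, hq₀t.2]
      refine Finset.mem_product.2 ⟨hS₁m _ ?_, hS₂m _ ?_⟩
      · rw [heq]; simpa using hP₁ ![a, π a, q.1, q.2]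
      · rw [heq]; simpa using hP₂ ![a, π a, q.1, q.2]
    calc _ ≤ (S₁ ×ˢ S₂).card := Finset.card_le_card hsub
      _ = S₁.card * S₂.card := Finset.card_product _ _
      _ ≤ D * D := Nat.mul_le_mul hS₁c hS₂c
      _ = D ^ 2 := (sq D).symm
  have hcover : A' ×ˢ (B ×ˢ C) ⊆
      far ∪ (A'.biUnion fun a => (degen a ∪ good a).image fun q => (a, q)) := by
    rintro ⟨a, q⟩ haq
    obtain ⟨ha, hq⟩ := Finset.mem_product.1 haq
    obtain ⟨hb, hc⟩ := Finset.mem_product.1 hq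
    rw [Finset.mem_union]
    by_cases hmem : (eval ![a, q.1, q.2] f, eval ![π a, q.1, q.2] f) ∈ Q
    · right
      refine Finset.mem_biUnion.2 ⟨a, ha, Finset.mem_image_of_mem _ (Finset.mem_union.2 ?_)⟩
      by_cases hw : eval ![a, π a, q.1, q.2] (w₁ * w₂) = 0
      · exact Or.inl (Finset.mem_filter.2 ⟨hq, hw⟩)
      · exact Or.inr (Finset.mem_filter.2 ⟨hq, hw, hmem⟩)
    · left
      refine Finset.mem_filter.2 ⟨haq, fun h => hmem ?_⟩
      simp only [hpe] at h
      exact h (hT a (hA' ha) _ hb _ hc) (hT _ (hπ a ha).1 _ hb _ hc)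
  have hcount : A'.card * (n * n) ≤
      far.card + A'.card * (2 * D * (n + n) + D ^ 2 * Q.card) := by
    have h1 := (Finset.card_le_card hcover).trans (Finset.card_union_le _ _)
    rw [Finset.card_product, Finset.card_product, hB, hC] at h1
    refine h1.trans (Nat.add_le_add_left (Finset.card_biUnion_le_card_mul _ _ _
      fun a ha => Finset.card_image_le.trans ((Finset.card_union_le _ _).trans ?_)) _)
    exact Nat.add_le_add (hdegen a ha) (hgood a ha)
  have hA'n : A'.card ≤ n := hA ▸ Finset.card_le_card hA'
  rw [Finset.card_product, hB, hC] at hfar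
  rw [hA] at hcard
  have h34 : 3 * n ≤ 4 * A'.card := by omega
  generalize A'.card = α at *
  generalize far.card = φ at *
  generalize Q.card = q at *
  have e1 : 3 * n * (n * n) ≤ 4 * (α * (n * n)) := by nlinarith
  have e2 : α * (2 * D * (n + n) + D ^ 2 * q) ≤ n * (2 * D * (n + n) + D ^ 2 * q) :=
    Nat.mul_le_mul_right _ hA'n
  have e3 : 16 * D * (n * n) ≤ n * (n * n) := Nat.mul_le_mul_right _ (by omega)
  calc n ^ 3 ≤ 4 * D ^ 2 * (n * q) := by nlinarith
    _ ≤ 4 * D ^ 2 * ((8 * (d + 1) * (2 * D + 2 + 1) + 4) * (T.card * (T.card + n))) :=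
      Nat.mul_le_mul_left _ hQ
    _ = _ := by ring

/-! ### Expansion for polynomials in two variables -/

theorem algebraicIndependent_quadruple {g : MvPolynomial (Fin 2) ℝ} {x u y z : ℝ}
    (h : eval ![x, y] (pderiv 0 g) * eval ![u, z] (pderiv 0 g) *
        (eval ![u, y] (pderiv 1 g) * eval ![x, z] (pderiv 1 g)) ≠
      eval ![x, z] (pderiv 0 g) * eval ![u, y] (pderiv 0 g) *
        (eval ![x, y] (pderiv 1 g) * eval ![u, z] (pderiv 1 g))) :
    AlgebraicIndependent ℝ (![rename ![0, 2] g, rename ![1, 2] g, rename ![0, 3] g,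
      rename ![1, 3] g] : Fin 4 → MvPolynomial (Fin 4) ℝ) := by
  by_contra hF
  obtain ⟨p, hp, hrel⟩ := exists_jacobian_relation _ hF
  have key : ∀ i j : Fin 4, i ≠ j →
      pderiv i (rename (![i, j] : Fin 2 → Fin 4) g) = rename ![i, j] (pderiv 0 g) ∧
      pderiv j (rename (![i, j] : Fin 2 → Fin 4) g) = rename ![i, j] (pderiv 1 g) ∧
      ∀ k, k ≠ i → k ≠ j → pderiv k (rename (![i, j] : Fin 2 → Fin 4) g) = 0 := by
    intro i j hij
    have hinj : Function.Injective (![i, j] : Fin 2 → Fin 4) := by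
      intro a b
      fin_cases a <;> fin_cases b <;> simp [hij, hij.symm]
    refine ⟨pderiv_rename hinj 0 g, pderiv_rename hinj 1 g, fun k hi hj => ?_⟩
    refine pderiv_eq_zero_of_notMem_vars fun hk => ?_
    obtain ⟨a, -, ha⟩ := mem_vars_rename _ _ hk
    fin_cases a
    · exact hi ha.symm
    · exact hj ha.symm
  obtain ⟨k1, k2, k3⟩ := key 0 2 (by decide)
  obtain ⟨l1, l2, l3⟩ := key 1 2 (by decide)
  obtain ⟨m1, m2, m3⟩ := key 0 3 (by decide)
  obtain ⟨n1, n2, n3⟩ := key 1 3 (by decide)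
  have r0 := hrel 0
  have r1 := hrel 1
  have r2 := hrel 2
  have r3 := hrel 3
  simp only [Fin.sum_univ_four, Matrix.cons_val] at r0 r1 r2 r3
  rw [k1, l3 0 (by decide) (by decide), m1, n3 0 (by decide) (by decide)] at r0
  rw [k3 1 (by decide) (by decide), l1, m3 1 (by decide) (by decide), n1] at r1
  rw [k2, l2, m3 2 (by decide) (by decide), n3 2 (by decide) (by decide)] at r2
  rw [k3 3 (by decide) (by decide), l3 3 (by decide) (by decide), m2, n2] at r3
  set a := rename (![0, 2] : Fin 2 → Fin 4) (pderiv 0 g) with ha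
  set b := rename (![0, 3] : Fin 2 → Fin 4) (pderiv 0 g) with hb
  set c := rename (![1, 2] : Fin 2 → Fin 4) (pderiv 0 g) with hc
  set e := rename (![1, 3] : Fin 2 → Fin 4) (pderiv 0 g) with he
  set s := rename (![0, 2] : Fin 2 → Fin 4) (pderiv 1 g) with hs
  set t := rename (![1, 2] : Fin 2 → Fin 4) (pderiv 1 g) with ht
  set q := rename (![0, 3] : Fin 2 → Fin 4) (pderiv 1 g) with hq
  set r := rename (![1, 3] : Fin 2 → Fin 4) (pderiv 1 g) with hr
  have hΔ : a * e * (t * q) - b * c * (s * r) ≠ 0 := fun h0 => h (by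
    have := congrArg (eval ![x, u, y, z]) h0
    have e1 : (![x, u, y, z] ∘ (![0, 2] : Fin 2 → Fin 4)) = ![x, y] := by
      ext i; fin_cases i <;> rfl
    have e2 : (![x, u, y, z] ∘ (![1, 2] : Fin 2 → Fin 4)) = ![u, y] := by
      ext i; fin_cases i <;> rfl
    have e3 : (![x, u, y, z] ∘ (![0, 3] : Fin 2 → Fin 4)) = ![x, z] := by
      ext i; fin_cases i <;> rfl
    have e4 : (![x, u, y, z] ∘ (![1, 3] : Fin 2 → Fin 4)) = ![u, z] := by
      ext i; fin_cases i <;> rfl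
    simp only [ha, hb, hc, he, hs, ht, hq, hr, map_sub, map_mul, eval_rename, e1, e2, e3, e4,
      map_zero] at this
    exact sub_eq_zero.1 this)
  have hcancel : ∀ i, p i * (a * e * (t * q) - b * c * (s * r)) = 0 → p i = 0 :=
    fun i hi => (mul_eq_zero.1 hi).resolve_right hΔ
  refine hp (funext fun i => hcancel i ?_)
  fin_cases i
  · change p 0 * _ = 0
    linear_combination e * t * q * r0 - b * e * t * r3 + r * b * t * r1 - c * r * b * r2
  · change p 1 * _ = 0
    linear_combination a * e * q * r2 - s * e * q * r0 + b * s * e * r3 - r * b * s * r1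
  · change p 2 * _ = 0
    linear_combination a * e * t * r3 - r * a * t * r1 + c * r * a * r2 - s * c * r * r0
  · change p 3 * _ = 0
    linear_combination a * t * q * r1 - c * a * q * r2 + s * c * q * r0 - b * s * c * r3

/-- Cauchy–Schwarz bound for the size of a set in terms of the coincidences of a map on it. -/
theorem card_sq_le_card_mul_energy {α β : Type*} [DecidableEq β] (G : Finset α) (Q : Finset β)
    (φ : α → β) (hφ : ∀ p ∈ G, φ p ∈ Q) :
    G.card ^ 2 ≤ Q.card * ∑ p ∈ G, (G.filter fun p' => φ p' = φ p).card := by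
  have h1 : G.card = ∑ q ∈ Q, (G.filter fun p => φ p = q).card :=
    Finset.card_eq_sum_card_fiberwise hφ
  have h2 : ∑ p ∈ G, (G.filter fun p' => φ p' = φ p).card =
      ∑ q ∈ Q, (G.filter fun p => φ p = q).card ^ 2 := by
    rw [← Finset.sum_fiberwise_of_maps_to hφ]
    refine Finset.sum_congr rfl fun q _ => ?_
    rw [Finset.sum_congr rfl (g := fun _ => (G.filter fun p => φ p = q).card)
      fun p hp => by rw [(Finset.mem_filter.1 hp).2]]
    rw [Finset.sum_const, smul_eq_mul, sq]
  rw [h2, h1]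
  exact sq_sum_le_card_mul_sum_sq

theorem exists_expansion_two (d : ℕ) : ∃ c : ℝ, 0 < c ∧ ∀ g : MvPolynomial (Fin 2) ℝ,
    g.totalDegree ≤ d → ∀ x u y z : ℝ,
      eval ![x, y] (pderiv 0 g) * eval ![u, z] (pderiv 0 g) *
        (eval ![u, y] (pderiv 1 g) * eval ![x, z] (pderiv 1 g)) ≠
      eval ![x, z] (pderiv 0 g) * eval ![u, y] (pderiv 0 g) *
        (eval ![x, y] (pderiv 1 g) * eval ![u, z] (pderiv 1 g)) →
    ∀ (A B T : Finset ℝ) (n : ℕ), A.card = n → B.card = n →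
      (∀ a ∈ A, ∀ b ∈ B, eval ![a, b] g ∈ T) →
      c * (n : ℝ) ^ ((3 : ℝ) / 2) ≤ T.card := by
  obtain ⟨D, hD⟩ := exists_elimination 4 (d + 1)
  obtain ⟨c, hc, hcn⟩ := exists_const_of_cube_le
    (4 * (d * (D * (d + 1) + D)) * (8 * (d + 1) * (D + d + 2 + 1) + 4)) (8 * (D + d) + 4)
  refine ⟨c, hc, fun g hg x u y z hne A B T n hA hB hT => hcn n T.card ?_ ?_⟩
  · intro hn
    obtain ⟨a, ha⟩ := Finset.card_pos.1 (hA ▸ hn)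
    obtain ⟨b, hb⟩ := Finset.card_pos.1 (hB ▸ hn)
    exact Finset.card_pos.2 ⟨_, hT a ha b hb⟩
  intro hn
  have hindep := algebraicIndependent_quadruple hne
  set F : Fin 4 → MvPolynomial (Fin 4) ℝ :=
    ![rename ![0, 2] g, rename ![1, 2] g, rename ![0, 3] g, rename ![1, 3] g] with hFdef
  have hren : ∀ e : Fin 2 → Fin 4, (rename e g).totalDegree ≤ d :=
    fun e => (totalDegree_rename_le _ _).trans hg
  have hFdeg : ∀ i, (F i).totalDegree ≤ d + 1 := fun i => by
    fin_cases i <;> exact (hren _).trans (Nat.le_succ d)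
  have hFval : ∀ a u b c : ℝ, (fun i => eval ![a, u, b, c] (F i)) =
      ![eval ![a, b] g, eval ![u, b] g, eval ![a, c] g, eval ![u, c] g] := fun a u b c => by
    have e1 : (![a, u, b, c] ∘ (![0, 2] : Fin 2 → Fin 4)) = ![a, b] := by
      ext i; fin_cases i <;> rfl
    have e2 : (![a, u, b, c] ∘ (![1, 2] : Fin 2 → Fin 4)) = ![u, b] := by
      ext i; fin_cases i <;> rfl
    have e3 : (![a, u, b, c] ∘ (![0, 3] : Fin 2 → Fin 4)) = ![a, c] := by
      ext i; fin_cases i <;> rfl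
    have e4 : (![a, u, b, c] ∘ (![1, 3] : Fin 2 → Fin 4)) = ![u, c] := by
      ext i; fin_cases i <;> rfl
    ext i
    fin_cases i <;> simp [F, eval_rename, e1, e2, e3, e4]
  obtain ⟨P, w, hw, hPd, hwd, hP, hS⟩ := hD F hFdeg hindep (X 0) (by simp)
  have hdiff : F 0 - F 2 ≠ 0 := sub_ne_zero.2 (hindep.injective.ne (by decide))
  obtain ⟨x₀, u₀, y₀, z₀, h0⟩ := exists_eval_ne_zero (mul_ne_zero hw hdiff)
  have hwd' : (w * (F 0 - F 2)).totalDegree ≤ D + d :=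
    (totalDegree_mul _ _).trans (Nat.add_le_add hwd ((totalDegree_sub _ _).trans
      (max_le (hren _) (hren _))))
  obtain ⟨A', hA', hcard, π, hπ, hov⟩ := exists_good_partner hwd' h0 A
  have hπw : ∀ a ∈ A', eval ![a, π a, y₀, z₀] w ≠ 0 := fun a ha h => (hπ a ha).2.2 (by simp [h])
  have hπg : ∀ a ∈ A', eval ![a, y₀] g ≠ eval ![a, z₀] g := fun a ha h => (hπ a ha).2.2 (by
    have e0 := congrFun (hFval a (π a) y₀ z₀) 0
    have e2 := congrFun (hFval a (π a) y₀ z₀) 2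
    simp only [Matrix.cons_val] at e0 e2
    rw [map_mul, map_sub, e0, e2, h, sub_self, mul_zero])
  have hslice : ∀ b : ℝ, ∃ p : Polynomial ℝ, p.natDegree ≤ d ∧
      ∀ t, p.eval t = eval ![t, b] g := fun b => by
    obtain ⟨p, hp, hpe⟩ := exists_slice g ![0, b] 0
    refine ⟨p, hp.trans hg, fun t => (hpe t).trans ?_⟩
    congr 2
    ext i; fin_cases i <;> simp
  choose p hpd hpe using hslice
  have hn0 : 0 < n := by omega
  obtain ⟨Q, hQ, hfar⟩ := exists_few_far_pairs A' π _ (fun a ha => (hπ a ha).2.1) hov T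
    B p hpd hn0
  set far := (A' ×ˢ B).filter fun q => ¬ ((p q.2).eval q.1 ∈ T →
    (p q.2).eval (π q.1) ∈ T → ((p q.2).eval q.1, (p q.2).eval (π q.1)) ∈ Q) with hfardef
  let φ : ℝ × ℝ → ℝ × ℝ := fun q => (eval ![q.1, q.2] g, eval ![π q.1, q.2] g)
  set G := (A' ×ˢ B).filter fun q => φ q ∈ Q with hG
  have hfiber : ∀ a ∈ A', ∀ t, (B.filter fun b => φ (a, b) = t).card ≤ d := fun a ha t => by
    have h1 : ∃ y, eval ![a, y] g ≠ t.1 := by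
      by_contra! h
      exact hπg a ha ((h y₀).trans (h z₀).symm)
    obtain ⟨y, hy⟩ := h1
    obtain ⟨S, hSc, hSm⟩ := exists_zeros_finset (G := g - C t.1) (D := d)
      ((totalDegree_sub_C_le _ _).trans hg) ![a, y] 1 (by simpa [sub_eq_zero] using hy)
    refine (Finset.card_le_card fun b hb => hSm b ?_).trans hSc
    have h2 := (Finset.mem_filter.1 hb).2
    have h3 : Function.update ![a, y] 1 b = ![a, b] := by
      ext i; fin_cases i <;> simp
    rw [h3, map_sub, eval_C, ← h2, sub_self]
  let shared : ℝ → ℝ → Finset ℝ := fun a a' =>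
    B.filter fun b => ∃ b' ∈ B, φ (a', b') = φ (a, b)
  have hshared : ∀ a ∈ A', ∃ S : Finset ℝ, S.card ≤ D ∧ ∀ a' ∈ A', a' ∉ S →
      (shared a a').card ≤ D * (d + 1) := fun a ha => by
    obtain ⟨S, hSc, hSm⟩ := hS _ (hπw a ha)
    refine ⟨S, hSc, fun a' ha' ha'S => ?_⟩
    by_contra! hlt
    apply ha'S
    set R : MvPolynomial (Fin 4) ℝ := aeval (Fin.cons (C a') F : Fin 5 → _) P with hR
    have hRe : ∀ v, eval v R = eval (Fin.cons a' fun i => eval v (F i)) P := fun v => by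
      rw [hR, eval_aeval]
      congr 2
      funext i
      refine Fin.cases ?_ (fun j => ?_) i <;> simp
    have hRd : R.totalDegree ≤ D * (d + 1) := by
      refine (totalDegree_aeval_le _ (d := d + 1) (fun i => ?_) P).trans
        (Nat.mul_le_mul_right _ hPd)
      refine Fin.cases ?_ (fun j => ?_) i
      · simp
      · simpa using hFdeg j
    have hzero : ∀ b ∈ shared a a', ∀ c ∈ shared a a', eval ![a, π a, b, c] R = 0 := by
      intro b hb c hc
      obtain ⟨-, b', -, hb'⟩ := Finset.mem_filter.1 hb
      obtain ⟨-, c', -, hc'⟩ := Finset.mem_filter.1 hc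
      simp only [φ, Prod.mk.injEq] at hb' hc'
      rw [hRe, hFval, ← hb'.1, ← hb'.2, ← hc'.1, ← hc'.2, ← hFval]
      simpa using hP ![a', π a', b', c']
    have hzero' : ∀ b ∈ shared a a', eval ![a, π a, b, z₀] R = 0 := fun b hb => by
      rw [← update_vec_three a (π a) b 0 z₀]
      refine eval_update_eq_zero_of_card_lt hRd _ 3 (shared a a') hlt (fun c hc => ?_) z₀
      rw [update_vec_three]
      exact hzero b hb c hc
    apply hSm
    rw [← hRe, ← update_vec_two a (π a) 0 z₀ y₀]
    refine eval_update_eq_zero_of_card_lt hRd _ 2 (shared a a') hlt (fun b hb => ?_) y₀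
    rw [update_vec_two]
    exact hzero' b hb
  have hA'n : A'.card ≤ n := hA ▸ Finset.card_le_card hA'
  have henergy : ∑ q ∈ G, (G.filter fun q' => φ q' = φ q).card ≤
      n * (n * (d * (D * (d + 1) + D))) := by
    calc ∑ q ∈ G, (G.filter fun q' => φ q' = φ q).card
        ≤ ∑ q ∈ A' ×ˢ B, ((A' ×ˢ B).filter fun q' => φ q' = φ q).card :=
          (Finset.sum_le_sum fun q _ => Finset.card_le_card
            (Finset.filter_subset_filter _ (Finset.filter_subset _ _))).trans
            (Finset.sum_le_sum_of_subset (Finset.filter_subset _ _))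
      _ = ∑ a ∈ A', ∑ b ∈ B, ∑ a' ∈ A', (B.filter fun b' => φ (a', b') = φ (a, b)).card := by
          simp only [Finset.card_filter, Finset.sum_product]
      _ = ∑ a ∈ A', ∑ a' ∈ A', ∑ b ∈ B, (B.filter fun b' => φ (a', b') = φ (a, b)).card :=
          Finset.sum_congr rfl fun a _ => Finset.sum_comm
      _ ≤ ∑ a ∈ A', ∑ a' ∈ A', d * (shared a a').card := by
          refine Finset.sum_le_sum fun a _ => Finset.sum_le_sum fun a' ha' => ?_
          rw [Finset.card_filter, Finset.mul_sum]
          refine Finset.sum_le_sum fun b _ => ?_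
          split_ifs with h
          · rw [mul_one]; exact hfiber a' ha' _
          · rw [Finset.filter_eq_empty_iff.2 fun b' hb' heq => h ⟨b', hb', heq⟩]; simp
      _ ≤ ∑ a ∈ A', n * (d * (D * (d + 1) + D)) := by
          refine Finset.sum_le_sum fun a ha => ?_
          obtain ⟨S, hSc, hSm⟩ := hshared a ha
          have h1 : ∀ a' ∈ A', (shared a a').card ≤ D * (d + 1) + if a' ∈ S then n else 0 :=
            fun a' ha' => by
              split_ifs with h
              · exact ((Finset.card_filter_le _ _).trans hB.le).trans (Nat.le_add_left _ _)
              · simpa using hSm a' ha' h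
          rw [← Finset.mul_sum]
          calc d * ∑ a' ∈ A', (shared a a').card
              ≤ d * ∑ a' ∈ A', (D * (d + 1) + if a' ∈ S then n else 0) :=
                Nat.mul_le_mul_left _ (Finset.sum_le_sum h1)
            _ = d * (A'.card * (D * (d + 1)) + (A'.filter fun a' => a' ∈ S).card * n) := by
                rw [Finset.sum_add_distrib, Finset.sum_const, ← Finset.sum_filter,
                  Finset.sum_const, smul_eq_mul, smul_eq_mul]
            _ ≤ d * (n * (D * (d + 1)) + D * n) := by
                gcongr
                exact (Finset.card_le_card fun a' h => (Finset.mem_filter.1 h).2).trans hSc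
            _ = _ := by ring
      _ ≤ _ := by
          rw [Finset.sum_const, smul_eq_mul]
          exact Nat.mul_le_mul_right _ hA'n
  have hCS := (card_sq_le_card_mul_energy G Q φ fun q hq => (Finset.mem_filter.1 hq).2).trans
    (Nat.mul_le_mul_left _ henergy)
  have hcover : A' ×ˢ B ⊆ far ∪ G := by
    rintro ⟨a, b⟩ hab
    obtain ⟨ha, hb⟩ := Finset.mem_product.1 hab
    rw [Finset.mem_union]
    by_cases hmem : φ (a, b) ∈ Q
    · exact Or.inr (Finset.mem_filter.2 ⟨hab, hmem⟩)
    · left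
      refine Finset.mem_filter.2 ⟨hab, fun h => hmem ?_⟩
      simp only [hpe] at h
      exact h (hT a (hA' ha) _ hb) (hT _ (hπ a ha).1 _ hb)
  have hcount := (Finset.card_le_card hcover).trans (Finset.card_union_le _ _)
  rw [Finset.card_product, hB] at hcount
  rw [hB] at hfar
  rw [hA] at hcard
  have h34 : 3 * n ≤ 4 * A'.card := by omega
  generalize A'.card = α at *
  generalize far.card = ψ at *
  generalize Q.card = q at *
  generalize G.card = γ at *
  set E := d * (D * (d + 1) + D)
  have e1 : n * n ≤ 2 * γ := by nlinarith
  have e2 : (n * n) * (n * n) ≤ (n * n) * (4 * E * q) := by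
    calc (n * n) * (n * n) ≤ (2 * γ) * (2 * γ) := Nat.mul_le_mul e1 e1
      _ = 4 * γ ^ 2 := by ring
      _ ≤ 4 * (q * (n * (n * E))) := Nat.mul_le_mul_left _ hCS
      _ = _ := by ring
  have e3 : n * n ≤ 4 * E * q := Nat.le_of_mul_le_mul_left e2 (by positivity)
  calc n ^ 3 = n * (n * n) := by ring
    _ ≤ n * (4 * E * q) := Nat.mul_le_mul_left _ e3
    _ = 4 * E * (n * q) := by ring
    _ ≤ 4 * E * ((8 * (d + 1) * (D + d + 2 + 1) + 4) * (T.card * (T.card + n))) :=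
      Nat.mul_le_mul_left _ hQ
    _ = _ := by ring

/-! ### Polynomials with separated gradient are special -/

theorem polynomial_eval_aeval {σ : Type*} (F : σ → Polynomial ℝ) (P : MvPolynomial σ ℝ) (t : ℝ) :
    (aeval F P).eval t = eval (fun i => (F i).eval t) P := by
  have h : (Polynomial.evalRingHom t).comp (aeval F : MvPolynomial σ ℝ →ₐ[ℝ] _).toRingHom =
      eval (fun i => (F i).eval t) := by
    ext <;> simp
  exact congrArg (fun φ : MvPolynomial σ ℝ →+* ℝ => φ P) h

theorem eval_polynomial_aeval_X {σ : Type*} (i : σ) (q : Polynomial ℝ) (v : σ → ℝ) :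
    eval v (Polynomial.aeval (X i : MvPolynomial σ ℝ) q) = q.eval (v i) := by
  rw [← coe_aeval_eq_eval, RingHom.coe_coe, ← Polynomial.aeval_algHom_apply, aeval_X,
    Polynomial.coe_aeval_eq_eval]

theorem aeval_C_X (q : Polynomial ℝ) :
    Polynomial.aeval (Polynomial.C Polynomial.X : Polynomial (Polynomial ℝ)) q =
      Polynomial.C q := by
  have := Polynomial.aeval_algHom_apply
    (Polynomial.CAlgHom : Polynomial ℝ →ₐ[ℝ] Polynomial (Polynomial ℝ)) Polynomial.X q
  rwa [Polynomial.aeval_X_left_apply] at this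

theorem exists_slice_zero (P : MvPolynomial (Fin 3) ℝ) (y z : ℝ) :
    ∃ q : Polynomial ℝ, ∀ t, q.eval t = eval ![t, y, z] P :=
  ⟨aeval ![Polynomial.X, Polynomial.C y, Polynomial.C z] P, fun t => by
    rw [polynomial_eval_aeval]
    congr 2
    funext i
    fin_cases i <;> simp⟩

theorem exists_slice_one (P : MvPolynomial (Fin 3) ℝ) (x z : ℝ) :
    ∃ q : Polynomial ℝ, ∀ t, q.eval t = eval ![x, t, z] P :=
  ⟨aeval ![Polynomial.C x, Polynomial.X, Polynomial.C z] P, fun t => by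
    rw [polynomial_eval_aeval]
    congr 2
    funext i
    fin_cases i <;> simp⟩

theorem exists_slice_two (P : MvPolynomial (Fin 3) ℝ) (x y : ℝ) :
    ∃ q : Polynomial ℝ, ∀ t, q.eval t = eval ![x, y, t] P :=
  ⟨aeval ![Polynomial.C x, Polynomial.C y, Polynomial.X] P, fun t => by
    rw [polynomial_eval_aeval]
    congr 2
    funext i
    fin_cases i <;> simp⟩

/-- The variables of the iterated polynomial ring. -/
def towerVars : Fin 3 → Polynomial (Polynomial (Polynomial ℝ)) :=
  ![Polynomial.C (Polynomial.C Polynomial.X), Polynomial.C Polynomial.X, Polynomial.X]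

/-- A polynomial in three variables as an iterated univariate polynomial, outermost in the last
variable. -/
def tower : MvPolynomial (Fin 3) ℝ →ₐ[ℝ] Polynomial (Polynomial (Polynomial ℝ)) :=
  aeval towerVars

/-- Evaluation of an iterated polynomial. -/
def towerEval (x y z : ℝ) : Polynomial (Polynomial (Polynomial ℝ)) →ₐ[ℝ] ℝ :=
  ((Polynomial.aeval x).comp
    ((Polynomial.aeval (Polynomial.C y : Polynomial ℝ)).restrictScalars ℝ)).comp
    ((Polynomial.aeval (Polynomial.C (Polynomial.C z) : Polynomial (Polynomial ℝ))).restrictScalars ℝ)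

theorem towerEval_tower (x y z : ℝ) (f : MvPolynomial (Fin 3) ℝ) :
    towerEval x y z (tower f) = eval ![x, y, z] f := by
  have h : (towerEval x y z).comp tower = aeval ![x, y, z] := by
    ext i
    fin_cases i <;> simp [tower, towerVars, towerEval]
  rw [← coe_aeval_eq_eval, RingHom.coe_coe, ← h]
  rfl

theorem tower_aeval_zero (q : Polynomial ℝ) :
    tower (Polynomial.aeval (X 0) q) = Polynomial.C (Polynomial.C q) := by
  rw [← Polynomial.aeval_algHom_apply]
  have := Polynomial.aeval_algHom_apply
    (Polynomial.CAlgHom : Polynomial (Polynomial ℝ) →ₐ[ℝ] Polynomial (Polynomial (Polynomial ℝ)))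
    (Polynomial.C Polynomial.X) q
  rw [aeval_C_X] at this
  simpa [tower, towerVars] using this

theorem tower_aeval_one (q : Polynomial ℝ) :
    tower (Polynomial.aeval (X 1) q) = Polynomial.C (q.map Polynomial.C) := by
  rw [← Polynomial.aeval_algHom_apply]
  have := Polynomial.aeval_algHom_apply
    (Polynomial.CAlgHom : Polynomial (Polynomial ℝ) →ₐ[ℝ] Polynomial (Polynomial (Polynomial ℝ)))
    Polynomial.X q
  rw [Polynomial.aeval_X_left_eq_map] at this
  simpa [tower, towerVars] using this

theorem tower_aeval_two (q : Polynomial ℝ) :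
    tower (Polynomial.aeval (X 2) q) = q.map (Polynomial.C.comp Polynomial.C) := by
  rw [← Polynomial.aeval_algHom_apply]
  have h : tower (X 2) = Polynomial.X := by simp [tower, towerVars]
  rw [h, Polynomial.aeval_X_left_eq_map]
  rfl

theorem tower_pderiv_zero (f : MvPolynomial (Fin 3) ℝ) :
    tower (pderiv 0 f) = coeffDeriv dx (tower f) := by
  have hX : dx Polynomial.X = 0 := coeffDeriv_X _
  rw [tower, derivation_aeval, Fin.sum_univ_three]
  simp [towerVars, hX]

theorem tower_pderiv_one (f : MvPolynomial (Fin 3) ℝ) (i : ℕ) :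
    (tower (pderiv 1 f)).coeff i = Polynomial.derivative ((tower f).coeff i) := by
  have h : tower (pderiv 1 f) = coeffDeriv ((Polynomial.derivative' : Derivation (Polynomial ℝ)
      (Polynomial (Polynomial ℝ)) (Polynomial (Polynomial ℝ))).restrictScalars ℝ) (tower f) := by
    rw [tower, derivation_aeval, Fin.sum_univ_three]
    simp [towerVars]
  rw [h]
  rfl

theorem tower_pderiv_two (f : MvPolynomial (Fin 3) ℝ) :
    tower (pderiv 2 f) = Polynomial.derivative (tower f) := by
  have h := derivation_aeval ((Polynomial.derivative' : Derivation (Polynomial (Polynomial ℝ))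
    (Polynomial (Polynomial (Polynomial ℝ)))
    (Polynomial (Polynomial (Polynomial ℝ)))).restrictScalars ℝ) towerVars f
  rw [Fin.sum_univ_three] at h
  simpa [tower, towerVars] using h.symm

theorem towerEval_aeval_add (x y z : ℝ) (g h k l : Polynomial ℝ) :
    towerEval x y z (Polynomial.aeval (Polynomial.C (Polynomial.C h) +
      Polynomial.C (k.map Polynomial.C) + l.map (Polynomial.C.comp Polynomial.C)) g) =
      g.eval (h.eval x + k.eval y + l.eval z) := by
  rw [← tower_aeval_zero, ← tower_aeval_one, ← tower_aeval_two, ← map_add, ← map_add,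
    Polynomial.aeval_algHom_apply, towerEval_tower, ← coe_aeval_eq_eval, RingHom.coe_coe,
    ← Polynomial.aeval_algHom_apply, Polynomial.coe_aeval_eq_eval, ← RingHom.coe_coe,
    coe_aeval_eq_eval, map_add, map_add]
  simp [eval_polynomial_aeval_X]

theorem towerEval_aeval_mul (x y z : ℝ) (g h k l : Polynomial ℝ) :
    towerEval x y z (Polynomial.aeval (Polynomial.C (Polynomial.C h) *
      Polynomial.C (k.map Polynomial.C) * l.map (Polynomial.C.comp Polynomial.C)) g) =
      g.eval (h.eval x * k.eval y * l.eval z) := by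
  rw [← tower_aeval_zero, ← tower_aeval_one, ← tower_aeval_two, ← map_mul, ← map_mul,
    Polynomial.aeval_algHom_apply, towerEval_tower, ← coe_aeval_eq_eval, RingHom.coe_coe,
    ← Polynomial.aeval_algHom_apply, Polynomial.coe_aeval_eq_eval, ← RingHom.coe_coe,
    coe_aeval_eq_eval, map_mul, map_mul]
  simp [eval_polynomial_aeval_X]

theorem eq_vec_three (v : Fin 3 → ℝ) : v = ![v 0, v 1, v 2] := by
  funext i
  fin_cases i <;> rfl

theorem eq_of_mul_eval_eq {P Q R : MvPolynomial (Fin 3) ℝ} (hR : R ≠ 0)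
    (h : ∀ x y z, eval ![x, y, z] R * eval ![x, y, z] P = eval ![x, y, z] R * eval ![x, y, z] Q) :
    P = Q := by
  refine mul_left_cancel₀ hR (MvPolynomial.funext fun v => ?_)
  rw [eq_vec_three v, map_mul, map_mul]
  exact h _ _ _

theorem exists_special_form_three {f : MvPolynomial (Fin 3) ℝ} (h0 : pderiv 0 f ≠ 0)
    (h1 : pderiv 1 f ≠ 0) (h2 : pderiv 2 f ≠ 0)
    (hx : ∀ x u y z, eval ![x, y, z] (pderiv 1 f) * eval ![u, y, z] (pderiv 2 f) =
      eval ![u, y, z] (pderiv 1 f) * eval ![x, y, z] (pderiv 2 f))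
    (hy : ∀ x y v z, eval ![x, y, z] (pderiv 0 f) * eval ![x, v, z] (pderiv 2 f) =
      eval ![x, v, z] (pderiv 0 f) * eval ![x, y, z] (pderiv 2 f))
    (hz : ∀ x y z w, eval ![x, y, z] (pderiv 0 f) * eval ![x, y, w] (pderiv 1 f) =
      eval ![x, y, w] (pderiv 0 f) * eval ![x, y, z] (pderiv 1 f)) :
    ∃ g h k l : Polynomial ℝ,
      (∀ x y z : ℝ, eval ![x, y, z] f = g.eval (h.eval x + k.eval y + l.eval z)) ∨
      (∀ x y z : ℝ, eval ![x, y, z] f = g.eval (h.eval x * k.eval y * l.eval z)) := by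
  obtain ⟨x₀, y₀, z₀, hO⟩ : ∃ x y z,
      eval ![x, y, z] (pderiv 0 f * pderiv 1 f * pderiv 2 f) ≠ 0 := by
    by_contra! hno
    refine mul_ne_zero (mul_ne_zero h0 h1) h2 (MvPolynomial.funext fun v => ?_)
    rw [eq_vec_three v, hno, map_zero]
  rw [map_mul, map_mul] at hO
  have hO0 := left_ne_zero_of_mul (left_ne_zero_of_mul hO)
  have hO1 := right_ne_zero_of_mul (left_ne_zero_of_mul hO)
  have hO2 := right_ne_zero_of_mul hO
  have hne : ∀ {q : Polynomial ℝ} {t r : ℝ}, q.eval t = r → r ≠ 0 → q ≠ 0 := by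
    rintro q t r hq hr rfl
    exact hr (by rw [← hq, Polynomial.eval_zero])
  obtain ⟨a, ha⟩ := exists_slice_zero (pderiv 2 f) y₀ z₀
  obtain ⟨c, hc⟩ := exists_slice_zero (pderiv 0 f) y₀ z₀
  obtain ⟨b, hb⟩ := exists_slice_one (pderiv 1 f) x₀ z₀
  obtain ⟨e, he⟩ := exists_slice_one (pderiv 2 f) x₀ z₀
  obtain ⟨E, hE⟩ := exists_slice_two (C (eval ![x₀, y₀, z₀] (pderiv 1 f)) * pderiv 2 f) x₀ y₀
  obtain ⟨K, hK⟩ := exists_slice_two (C (eval ![x₀, y₀, z₀] (pderiv 2 f)) * pderiv 1 f) x₀ y₀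
  simp only [map_mul, eval_C] at hE hK
  have hxy : Polynomial.aeval (X 0) a * Polynomial.aeval (X 1) b * pderiv 0 f =
      Polynomial.aeval (X 0) c * Polynomial.aeval (X 1) e * pderiv 1 f := by
    have heval : ∀ x y z, eval ![x, y, z] (aeval ![X 0, X 1, C z₀] (pderiv 1 f * pderiv 2 f)) =
        eval ![x, y, z₀] (pderiv 1 f) * eval ![x, y, z₀] (pderiv 2 f) := fun x y z => by
      rw [eval_aeval, ← map_mul]
      congr 2
      funext i
      fin_cases i <;> simp
    refine eq_of_mul_eval_eq (R := aeval ![X 0, X 1, C z₀] (pderiv 1 f * pderiv 2 f)) ?_ ?_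
    · intro h
      have := heval x₀ y₀ z₀
      rw [h, map_zero] at this
      exact mul_ne_zero hO1 hO2 this.symm
    · intro x y z
      rw [heval]
      simp only [map_mul, eval_polynomial_aeval_X, Matrix.cons_val_zero, Matrix.cons_val_one,
        ha, hb, hc, he]
      have e1 := hz x y z z₀
      have e2 := hy x y y₀ z₀
      have e3 := hx x x₀ y z₀
      linear_combination eval ![x, y, z₀] (pderiv 2 f) * (
        eval ![x, y₀, z₀] (pderiv 2 f) * eval ![x₀, y, z₀] (pderiv 1 f) * e1 +
        eval ![x₀, y, z₀] (pderiv 1 f) * eval ![x, y, z] (pderiv 1 f) * e2 -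
        eval ![x, y₀, z₀] (pderiv 0 f) * eval ![x, y, z] (pderiv 1 f) * e3)
  have hxz : Polynomial.aeval (X 0) a * Polynomial.aeval (X 2) E * pderiv 0 f =
      Polynomial.aeval (X 0) c * Polynomial.aeval (X 2) K * pderiv 2 f := by
    have heval : ∀ x y z, eval ![x, y, z] (aeval ![X 0, C y₀, X 2] (pderiv 2 f)) =
        eval ![x, y₀, z] (pderiv 2 f) := fun x y z => by
      rw [eval_aeval]
      congr 2
      funext i
      fin_cases i <;> simp
    refine eq_of_mul_eval_eq (R := aeval ![X 0, C y₀, X 2] (pderiv 2 f)) ?_ ?_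
    · intro h
      have := heval x₀ y₀ z₀
      rw [h, map_zero] at this
      exact hO2 this.symm
    · intro x y z
      rw [heval]
      simp only [map_mul, eval_polynomial_aeval_X, Matrix.cons_val_zero, Matrix.cons_val,
        ha, hc, hE, hK]
      have e1 := hy x y y₀ z
      have e2 := hz x y₀ z z₀
      have e3 := hx x x₀ y₀ z
      have e4 := hx x x₀ y₀ z₀
      linear_combination
        eval ![x, y₀, z₀] (pderiv 2 f) * eval ![x₀, y₀, z₀] (pderiv 1 f) *
          eval ![x₀, y₀, z] (pderiv 2 f) * e1 +
        eval ![x, y, z] (pderiv 2 f) * (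
          eval ![x₀, y₀, z₀] (pderiv 2 f) * eval ![x₀, y₀, z] (pderiv 2 f) * e2 +
          eval ![x, y₀, z₀] (pderiv 0 f) * eval ![x₀, y₀, z₀] (pderiv 2 f) * e3 -
          eval ![x₀, y₀, z] (pderiv 2 f) * eval ![x, y₀, z] (pderiv 0 f) * e4)
  have txy := congrArg tower hxy
  have txz := congrArg tower hxz
  simp only [map_mul, tower_aeval_zero, tower_aeval_one, tower_aeval_two, tower_pderiv_zero,
    tower_pderiv_two] at txy txz
  have hcomp : ∀ i, Compatible a b c e ((tower f).coeff i) := fun i => by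
    have := congrArg (fun F => F.coeff i) txy
    simp only [← Polynomial.C_mul, Polynomial.coeff_C_mul, tower_pderiv_one] at this
    exact this
  have hne1 : tower (pderiv 1 f) ≠ 0 := fun h => by
    have := towerEval_tower x₀ y₀ z₀ (pderiv 1 f)
    rw [h, map_zero] at this
    exact hO1 this.symm
  have hne2 : tower (pderiv 2 f) ≠ 0 := fun h => by
    have := towerEval_tower x₀ y₀ z₀ (pderiv 2 f)
    rw [h, map_zero] at this
    exact hO2 this.symm
  obtain ⟨i, hi⟩ : ∃ i, Polynomial.derivative ((tower f).coeff i) ≠ 0 := by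
    by_contra! hno
    exact hne1 (Polynomial.ext fun i => by rw [tower_pderiv_one, hno, Polynomial.coeff_zero])
  obtain ⟨g, h, k, l, hform⟩ := exists_form_three (hne (ha x₀) hO2) (hne (hb y₀) hO1)
    (hne (hc x₀) hO0) (hne (he y₀) hO2) (hne (hE z₀) (mul_ne_zero hO1 hO2))
    (hne (hK z₀) (mul_ne_zero hO2 hO1)) hcomp txz hi (by rw [← tower_pderiv_two]; exact hne2)
  refine ⟨g, h, k, l, hform.imp (fun H x y z => ?_) fun H x y z => ?_⟩
  · rw [← towerEval_tower, H, towerEval_aeval_add]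
  · rw [← towerEval_tower, H, towerEval_aeval_mul]

theorem eval_eq_of_pderiv_eq_zero {σ : Type*} [Fintype σ] {f : MvPolynomial σ ℝ} {i : σ}
    (h : pderiv i f = 0) {v w : σ → ℝ} (hvw : ∀ j ≠ i, v j = w j) : eval v f = eval w f := by
  classical
  set F : σ → Polynomial ℝ := fun j => if j = i then Polynomial.X else Polynomial.C (v j) with hF
  have hd : Polynomial.derivative (aeval F f) = 0 := by
    have := derivation_aeval (Polynomial.derivative' (R := ℝ)) F f
    rw [Polynomial.derivative'_apply] at this
    rw [this]
    refine Finset.sum_eq_zero fun j _ => ?_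
    by_cases hj : j = i
    · rw [hj, h, map_zero, zero_mul]
    · simp [hF, hj]
  have hconst := Polynomial.eq_C_of_derivative_eq_zero hd
  have hv := polynomial_eval_aeval F f (v i)
  have hw := polynomial_eval_aeval F f (w i)
  rw [hconst, Polynomial.eval_C] at hv hw
  have e1 : (fun j => (F j).eval (v i)) = v := by
    funext j
    by_cases hj : j = i <;> simp [hF, hj]
  have e2 : (fun j => (F j).eval (w i)) = w := by
    funext j
    by_cases hj : j = i <;> simp [hF, hj, hvw]
  rw [e1] at hv
  rw [e2] at hw
  exact hv.symm.trans hw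

/-- The two exceptional forms. -/
def IsSpecial (f : MvPolynomial (Fin 3) ℝ) : Prop :=
  ∃ g h k l : Polynomial ℝ,
    (∀ x y z : ℝ, eval ![x, y, z] f = g.eval (h.eval x + k.eval y + l.eval z)) ∨
    (∀ x y z : ℝ, eval ![x, y, z] f = g.eval (h.eval x * k.eval y * l.eval z))

/-- The lower bound `c n ^ (3 / 2)` on the number of values on `n × n × n` grids. -/
def Expands (c : ℝ) (f : MvPolynomial (Fin 3) ℝ) : Prop :=
  ∀ (A B C T : Finset ℝ) (n : ℕ), A.card = n → B.card = n → C.card = n →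
    (∀ a ∈ A, ∀ b ∈ B, ∀ c ∈ C, eval ![a, b, c] f ∈ T) → c * (n : ℝ) ^ ((3 : ℝ) / 2) ≤ T.card

theorem Expands.mono {c c' : ℝ} {f : MvPolynomial (Fin 3) ℝ} (h : Expands c f) (hc : c' ≤ c) :
    Expands c' f := fun A B C T n hA hB hC hT =>
  (mul_le_mul_of_nonneg_right hc (by positivity)).trans (h A B C T n hA hB hC hT)

/-- Interchanging the first two variables. -/
def swapFirst (f : MvPolynomial (Fin 3) ℝ) : MvPolynomial (Fin 3) ℝ := rename (Equiv.swap 0 1) f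

/-- Interchanging the last two variables. -/
def swapLast (f : MvPolynomial (Fin 3) ℝ) : MvPolynomial (Fin 3) ℝ := rename (Equiv.swap 1 2) f

theorem eval_swapFirst (f : MvPolynomial (Fin 3) ℝ) (x y z : ℝ) :
    eval ![x, y, z] (swapFirst f) = eval ![y, x, z] f := by
  rw [swapFirst, eval_rename]
  congr 2
  funext i
  fin_cases i <;> rfl

theorem eval_swapLast (f : MvPolynomial (Fin 3) ℝ) (x y z : ℝ) :
    eval ![x, y, z] (swapLast f) = eval ![x, z, y] f := by
  rw [swapLast, eval_rename]
  congr 2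
  funext i
  fin_cases i <;> rfl

theorem pderiv_swapFirst (f : MvPolynomial (Fin 3) ℝ) (i : Fin 3) :
    pderiv (Equiv.swap 0 1 i) (swapFirst f) = swapFirst (pderiv i f) :=
  pderiv_rename (Equiv.injective _) _ _

theorem pderiv_swapLast (f : MvPolynomial (Fin 3) ℝ) (i : Fin 3) :
    pderiv (Equiv.swap 1 2 i) (swapLast f) = swapLast (pderiv i f) :=
  pderiv_rename (Equiv.injective _) _ _

theorem IsSpecial.of_swapFirst {f : MvPolynomial (Fin 3) ℝ} (h : IsSpecial (swapFirst f)) :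
    IsSpecial f := by
  obtain ⟨g, h, k, l, H⟩ := h
  refine ⟨g, k, h, l, H.imp (fun H x y z => ?_) fun H x y z => ?_⟩
  · rw [← eval_swapFirst, H, add_comm (h.eval y)]
  · rw [← eval_swapFirst, H, mul_comm (h.eval y)]

theorem IsSpecial.of_swapLast {f : MvPolynomial (Fin 3) ℝ} (h : IsSpecial (swapLast f)) :
    IsSpecial f := by
  obtain ⟨g, h, k, l, H⟩ := h
  refine ⟨g, h, l, k, H.imp (fun H x y z => ?_) fun H x y z => ?_⟩
  · rw [← eval_swapLast, H, add_right_comm]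
  · rw [← eval_swapLast, H, mul_right_comm]

theorem Expands.of_swapFirst {c : ℝ} {f : MvPolynomial (Fin 3) ℝ} (h : Expands c (swapFirst f)) :
    Expands c f := fun A B C T n hA hB hC hT =>
  h B A C T n hB hA hC fun b hb a ha c hc => by
    rw [eval_swapFirst]
    exact hT a ha b hb c hc

theorem Expands.of_swapLast {c : ℝ} {f : MvPolynomial (Fin 3) ℝ} (h : Expands c (swapLast f)) :
    Expands c f := fun A B C T n hA hB hC hT =>
  h A C B T n hA hC hB fun a ha c hc b hb => by
    rw [eval_swapLast]
    exact hT a ha b hb c hc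

theorem exists_expands_or_isSpecial_of_pderiv_ne_zero (d : ℕ) : ∃ c : ℝ, 0 < c ∧
    ∀ f : MvPolynomial (Fin 3) ℝ, f.totalDegree ≤ d → pderiv 0 f ≠ 0 → pderiv 1 f ≠ 0 →
      pderiv 2 f ≠ 0 → Expands c f ∨ IsSpecial f := by
  obtain ⟨c, hc, H⟩ := exists_expansion_three d
  refine ⟨c, hc, fun f hf h0 h1 h2 => ?_⟩
  by_cases hx : ∀ x u y z, eval ![x, y, z] (pderiv 1 f) * eval ![u, y, z] (pderiv 2 f) =
      eval ![u, y, z] (pderiv 1 f) * eval ![x, y, z] (pderiv 2 f)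
  swap
  · push Not at hx
    obtain ⟨x, u, y, z, hne⟩ := hx
    exact Or.inl (H f hf x u y z hne)
  have hf' : (swapFirst f).totalDegree ≤ d := (totalDegree_rename_le _ _).trans hf
  by_cases hy : ∀ x y v z, eval ![x, y, z] (pderiv 0 f) * eval ![x, v, z] (pderiv 2 f) =
      eval ![x, v, z] (pderiv 0 f) * eval ![x, y, z] (pderiv 2 f)
  swap
  · push Not at hy
    obtain ⟨x, y, v, z, hne⟩ := hy
    refine Or.inl (Expands.of_swapFirst (H (swapFirst f) hf' y v x z ?_))
    have e1 : pderiv 1 (swapFirst f) = swapFirst (pderiv 0 f) := pderiv_swapFirst f 0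
    have e2 : pderiv 2 (swapFirst f) = swapFirst (pderiv 2 f) := pderiv_swapFirst f 2
    simpa only [e1, e2, eval_swapFirst] using hne
  by_cases hz : ∀ x y z w, eval ![x, y, z] (pderiv 0 f) * eval ![x, y, w] (pderiv 1 f) =
      eval ![x, y, w] (pderiv 0 f) * eval ![x, y, z] (pderiv 1 f)
  swap
  · push Not at hz
    obtain ⟨x, y, z, w, hne⟩ := hz
    refine Or.inl (Expands.of_swapLast (Expands.of_swapFirst
      (H (swapFirst (swapLast f)) ?_ z w x y ?_)))
    · exact (totalDegree_rename_le _ _).trans ((totalDegree_rename_le _ _).trans hf)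
    · have e1 : pderiv 1 (swapFirst (swapLast f)) = swapFirst (swapLast (pderiv 0 f)) :=
        (pderiv_swapFirst _ 0).trans (congrArg swapFirst (pderiv_swapLast f 0))
      have e2 : pderiv 2 (swapFirst (swapLast f)) = swapFirst (swapLast (pderiv 1 f)) :=
        (pderiv_swapFirst _ 2).trans (congrArg swapFirst (pderiv_swapLast f 1))
      simpa only [e1, e2, eval_swapFirst, eval_swapLast] using hne
  exact Or.inr (exists_special_form_three h0 h1 h2 hx hy hz)

theorem pderiv_comm {σ : Type*} (i j : σ) (f : MvPolynomial σ ℝ) :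
    pderiv i (pderiv j f) = pderiv j (pderiv i f) := by
  classical
  have h : ⁅pderiv i, pderiv j⁆ = (0 : Derivation ℝ (MvPolynomial σ ℝ) (MvPolynomial σ ℝ)) :=
    derivation_ext fun k => by
      rw [Derivation.commutator_apply, pderiv_X, pderiv_X, Derivation.zero_apply]
      simp only [Pi.single_apply]
      split_ifs <;> simp
  exact sub_eq_zero.1 (by rw [← Derivation.commutator_apply, h, Derivation.zero_apply])

theorem isSpecial_of_pderiv_two_eq_zero {f : MvPolynomial (Fin 3) ℝ} (h0 : pderiv 0 f ≠ 0)
    (h1 : pderiv 1 f ≠ 0) (h2 : pderiv 2 f = 0)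
    (h : ∀ x u y z,
      eval ![x, y, 0] (pderiv 0 f) * eval ![u, z, 0] (pderiv 0 f) *
        (eval ![u, y, 0] (pderiv 1 f) * eval ![x, z, 0] (pderiv 1 f)) =
      eval ![x, z, 0] (pderiv 0 f) * eval ![u, y, 0] (pderiv 0 f) *
        (eval ![x, y, 0] (pderiv 1 f) * eval ![u, z, 0] (pderiv 1 f))) : IsSpecial f := by
  have hcomm : ∀ i, pderiv 2 (pderiv i f) = 0 := fun i => by
    rw [pderiv_comm, h2, map_zero]
  have hind : ∀ (i : Fin 3) x y z, eval ![x, y, z] (pderiv i f) = eval ![x, y, 0] (pderiv i f) :=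
    fun i x y z => eval_eq_of_pderiv_eq_zero (hcomm i) fun j hj => by
      fin_cases j
      · rfl
      · rfl
      · exact absurd rfl hj
  obtain ⟨u, v, hO⟩ : ∃ x y, eval ![x, y, 0] (pderiv 0 f * pderiv 1 f) ≠ 0 := by
    by_contra! hno
    refine mul_ne_zero h0 h1 (MvPolynomial.funext fun v => ?_)
    rw [eq_vec_three v, map_mul, hind 0 (v 0) (v 1) (v 2),
      hind 1 (v 0) (v 1) (v 2), ← map_mul, hno, map_zero]
  rw [map_mul] at hO
  have hO0 := left_ne_zero_of_mul hO
  have hO1 := right_ne_zero_of_mul hO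
  have hne : ∀ {q : Polynomial ℝ} {t r : ℝ}, q.eval t = r → r ≠ 0 → q ≠ 0 := by
    rintro q t r hq hr rfl
    exact hr (by rw [← hq, Polynomial.eval_zero])
  obtain ⟨a, ha⟩ := exists_slice_zero (C (eval ![u, v, 0] (pderiv 0 f)) * pderiv 1 f) v 0
  obtain ⟨c, hc⟩ := exists_slice_zero (C (eval ![u, v, 0] (pderiv 1 f)) * pderiv 0 f) v 0
  obtain ⟨b, hb⟩ := exists_slice_one (pderiv 1 f) u 0
  obtain ⟨e, he⟩ := exists_slice_one (pderiv 0 f) u 0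
  simp only [map_mul, eval_C] at ha hc
  have hxy : Polynomial.aeval (X 0) a * Polynomial.aeval (X 1) b * pderiv 0 f =
      Polynomial.aeval (X 0) c * Polynomial.aeval (X 1) e * pderiv 1 f := by
    refine MvPolynomial.funext fun w => ?_
    rw [eq_vec_three w]
    simp only [map_mul, eval_polynomial_aeval_X, Matrix.cons_val_zero, Matrix.cons_val_one,
      ha, hb, hc, he, hind 0 (w 0) (w 1) (w 2), hind 1 (w 0) (w 1) (w 2)]
    linear_combination h (w 0) u (w 1) v
  have txy := congrArg tower hxy
  simp only [map_mul, tower_aeval_zero, tower_aeval_one, tower_pderiv_zero] at txy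
  have hcomp : Compatible a b c e ((tower f).coeff 0) := by
    have := congrArg (fun F => F.coeff 0) txy
    simp only [← Polynomial.C_mul, Polynomial.coeff_C_mul, tower_pderiv_one] at this
    exact this
  have hconst : tower f = Polynomial.C ((tower f).coeff 0) := by
    refine Polynomial.eq_C_of_derivative_eq_zero ?_
    rw [← tower_pderiv_two, h2, map_zero]
  have hd : Polynomial.derivative ((tower f).coeff 0) ≠ 0 := fun hd => by
    have e1 : tower (pderiv 1 f) = 0 := Polynomial.ext fun i => by
      rw [tower_pderiv_one, hconst, Polynomial.coeff_C]
      split_ifs <;> simp [hd]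
    have := towerEval_tower u v 0 (pderiv 1 f)
    rw [e1, map_zero] at this
    exact hO1 this.symm
  obtain ⟨g, φ, ψ, hform⟩ := exists_form_two (hne (ha u) (mul_ne_zero hO0 hO1)) (hne (hb v) hO1)
    (hne (hc u) (mul_ne_zero hO1 hO0)) (hne (he v) hO0) hcomp hd
  have hC : ∀ p : Polynomial (Polynomial ℝ), Polynomial.C (Polynomial.aeval p g) =
      Polynomial.aeval (Polynomial.C p) g := fun p =>
    (Polynomial.aeval_algHom_apply (Polynomial.CAlgHom :
      Polynomial (Polynomial ℝ) →ₐ[ℝ] Polynomial (Polynomial (Polynomial ℝ))) p g).symm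
  rcases hform with hform | hform
  · refine ⟨g, φ, ψ, 0, Or.inl fun x y z => ?_⟩
    rw [← towerEval_aeval_add, Polynomial.map_zero, add_zero, ← Polynomial.C_add, ← hC, ← hform,
      ← hconst, towerEval_tower]
  · refine ⟨g, φ, ψ, 1, Or.inr fun x y z => ?_⟩
    rw [← towerEval_aeval_mul, Polynomial.map_one, mul_one, ← Polynomial.C_mul, ← hC, ← hform,
      ← hconst, towerEval_tower]

theorem exists_expands_or_isSpecial_of_pderiv_two_eq_zero (d : ℕ) : ∃ c : ℝ, 0 < c ∧
    ∀ f : MvPolynomial (Fin 3) ℝ, f.totalDegree ≤ d → pderiv 2 f = 0 →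
      Expands c f ∨ IsSpecial f := by
  obtain ⟨c, hc, H⟩ := exists_expansion_two d
  refine ⟨c, hc, fun f hf h2 => ?_⟩
  have hind : ∀ x y z, eval ![x, y, z] f = eval ![x, y, 0] f := fun x y z =>
    eval_eq_of_pderiv_eq_zero h2 fun j hj => by
      fin_cases j
      · rfl
      · rfl
      · exact absurd rfl hj
  by_cases h1 : pderiv 1 f = 0
  · obtain ⟨g, hg⟩ := exists_slice_zero f 0 0
    refine Or.inr ⟨g, Polynomial.X, 0, 0, Or.inl fun x y z => ?_⟩
    rw [hind]
    simp only [Polynomial.eval_X, Polynomial.eval_zero, add_zero, hg]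
    refine eval_eq_of_pderiv_eq_zero h1 fun j hj => ?_
    fin_cases j
    · rfl
    · exact absurd rfl hj
    · rfl
  by_cases h0 : pderiv 0 f = 0
  · obtain ⟨g, hg⟩ := exists_slice_one f 0 0
    refine Or.inr ⟨g, 0, Polynomial.X, 0, Or.inl fun x y z => ?_⟩
    rw [hind]
    simp only [Polynomial.eval_X, Polynomial.eval_zero, add_zero, zero_add, hg]
    refine eval_eq_of_pderiv_eq_zero h0 fun j hj => ?_
    fin_cases j
    · exact absurd rfl hj
    · rfl
    · rfl
  set F : Fin 3 → MvPolynomial (Fin 2) ℝ := ![X 0, X 1, 0] with hF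
  have heval : ∀ (P : MvPolynomial (Fin 3) ℝ) x y, eval ![x, y] (aeval F P) = eval ![x, y, 0] P :=
    fun P x y => by
      rw [eval_aeval]
      congr 2
      funext i
      fin_cases i <;> simp [hF]
  have hp0 : pderiv 0 (aeval F f) = aeval F (pderiv 0 f) := by
    rw [derivation_aeval, Fin.sum_univ_three]
    simp [hF, pderiv_X]
  have hp1 : pderiv 1 (aeval F f) = aeval F (pderiv 1 f) := by
    rw [derivation_aeval, Fin.sum_univ_three]
    simp [hF, pderiv_X]
  have hdeg : (aeval F f).totalDegree ≤ d := by
    refine ((totalDegree_aeval_le F (d := 1) (fun i => ?_) f).trans (by rw [mul_one])).trans hf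
    fin_cases i <;> simp [hF]
  by_cases hsep : ∀ x u y z,
      eval ![x, y, 0] (pderiv 0 f) * eval ![u, z, 0] (pderiv 0 f) *
        (eval ![u, y, 0] (pderiv 1 f) * eval ![x, z, 0] (pderiv 1 f)) =
      eval ![x, z, 0] (pderiv 0 f) * eval ![u, y, 0] (pderiv 0 f) *
        (eval ![x, y, 0] (pderiv 1 f) * eval ![u, z, 0] (pderiv 1 f))
  · exact Or.inr (isSpecial_of_pderiv_two_eq_zero h0 h1 h2 hsep)
  push Not at hsep
  obtain ⟨x, u, y, z, hne⟩ := hsep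
  refine Or.inl fun A B D T n hA hB hD hT => ?_
  rcases D.eq_empty_or_nonempty with rfl | ⟨t, ht⟩
  · rw [← hD, Finset.card_empty, Nat.cast_zero, Real.zero_rpow (by norm_num), mul_zero]
    positivity
  · refine H (aeval F f) hdeg x u y z ?_ A B T n hA hB fun a ha b hb => ?_
    · simpa only [hp0, hp1, heval] using hne
    · rw [heval, ← hind a b t]
      exact hT a ha b hb t ht

theorem exists_expands_or_isSpecial (d : ℕ) : ∃ c : ℝ, 0 < c ∧
    ∀ f : MvPolynomial (Fin 3) ℝ, f.totalDegree ≤ d → Expands c f ∨ IsSpecial f := by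
  obtain ⟨c, hc, H⟩ := exists_expands_or_isSpecial_of_pderiv_ne_zero d
  obtain ⟨c', hc', H'⟩ := exists_expands_or_isSpecial_of_pderiv_two_eq_zero d
  refine ⟨min c c', lt_min hc hc', fun f hf => ?_⟩
  have hf₁ : (swapLast f).totalDegree ≤ d := (totalDegree_rename_le _ _).trans hf
  have hf₂ : (swapLast (swapFirst f)).totalDegree ≤ d :=
    (totalDegree_rename_le _ _).trans ((totalDegree_rename_le _ _).trans hf)
  by_cases h2 : pderiv 2 f = 0
  · exact (H' f hf h2).imp_left fun h => h.mono (min_le_right _ _)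
  by_cases h1 : pderiv 1 f = 0
  · have e : pderiv 2 (swapLast f) = 0 :=
      (pderiv_swapLast f 1).trans (by rw [h1, swapLast, map_zero])
    exact (H' _ hf₁ e).imp (fun h => h.of_swapLast.mono (min_le_right _ _)) IsSpecial.of_swapLast
  by_cases h0 : pderiv 0 f = 0
  · have e : pderiv 2 (swapLast (swapFirst f)) = 0 := by
      refine (pderiv_swapLast (swapFirst f) 1).trans ?_
      have e' : pderiv 1 (swapFirst f) = 0 :=
        (pderiv_swapFirst f 0).trans (by rw [h0, swapFirst, map_zero])
      rw [e', swapLast, map_zero]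
    exact (H' _ hf₂ e).imp (fun h => h.of_swapLast.of_swapFirst.mono (min_le_right _ _))
      fun h => h.of_swapLast.of_swapFirst
  exact (H f hf h0 h1 h2).imp_left fun h => h.mono (min_le_left _ _)

end ExpandingPolynomial

end

noncomputable section

attribute [local instance] Classical.propDecidable

/-- **Expansion bound for three-variable real polynomials** (Corollary 1.3).
For `f ∈ ℝ[x,y,z]` of degree `d`, either `|f(A×B×C)| ≥ c·n^{3/2}` for all finite
`A,B,C ⊂ ℝ` of equal size `n`, with `c > 0` depending only on `d`, or
`f = g(h(x)+k(y)+l(z))` or `f = g(h(x)·k(y)·l(z))` for univariate `g,h,k,l`. -/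
theorem expanding_polynomial_three_vars (d : ℕ) :
    ∃ c : ℝ, 0 < c ∧ ∀ f : MvPolynomial (Fin 3) ℝ, f.totalDegree = d →
      (∀ A B C : Finset ℝ, A.card = B.card → B.card = C.card →
          c * (A.card : ℝ) ^ ((3:ℝ)/2) ≤
            (((A ×ˢ B ×ˢ C).image fun p : ℝ × ℝ × ℝ => eval ![p.1, p.2.1, p.2.2] f).card : ℝ))
      ∨ (∃ g h k l : Polynomial ℝ,
          (∀ x y z : ℝ, eval ![x, y, z] f =
            Polynomial.eval (Polynomial.eval x h + Polynomial.eval y k + Polynomial.eval z l) g) ∨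
          (∀ x y z : ℝ, eval ![x, y, z] f =
            Polynomial.eval (Polynomial.eval x h * Polynomial.eval y k * Polynomial.eval z l) g)) := by
  obtain ⟨c, hc, H⟩ := ExpandingPolynomial.exists_expands_or_isSpecial d
  refine ⟨c, hc, fun f hf => (H f hf.le).imp (fun h A B C hAB hBC => ?_) id⟩
  exact h A B C _ A.card rfl hAB.symm (hBC.symm.trans hAB.symm) fun a ha b hb c hc =>
    Finset.mem_image.2 ⟨(a, b, c), by simp [ha, hb, hc], rfl⟩
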